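/- arXiv:1507.02901 — 4 statements merged into one kernel-verified Lean document; each statement's English description precedes it below -/
import Mathlib

section
/- Let 𝔏 be a complex Hilbert space, A an invertible positive bounded operator on 𝔏, T = A⊗S on ℓ²(ℕ,𝔏), and λ an extended eigenvalue of T. Then E_ext(T,λ) equals the closure, in the weak operator topology of the bounded operators on ℓ²(ℕ,𝔏) (which for convex sets coincides with the weak-* closure), of the linear span of the operators (I⊗Sᵐ)∘D_{A,L,λ} over m ∈ ℕ and L ∈ 𝒜_{|λ|}(A), where I⊗Sᵐ is the m-fold shift, ((I⊗Sᵐ)x)_{k+m} = x_k and ((I⊗Sᵐ)x)_j = 0 for j < m, and D_{A,L,λ} is the (bounded, since L ∈ 𝒜_{|λ|}(A) and A is invertible) diagonal operator (D_{A,L,λ}x)ₙ = λ^{-n}·Aⁿ L A^{-n} xₙ. -/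
open ContinuousLinearMap

noncomputable section

/-- The modulus `|T| = (T*T)^(1/2)` of a bounded operator on a complex Hilbert space. -/
def modulus {H : Type*} [NormedAddCommGroup H] [InnerProductSpace ℂ H] [CompleteSpace H]
    (T : H →L[ℂ] H) : H →L[ℂ] H :=
  CFC.sqrt (adjoint T ∘L T)

/-- A bounded operator is quasinormal if it commutes with its modulus. -/
def IsQuasinormal {H : Type*} [NormedAddCommGroup H] [InnerProductSpace ℂ H] [CompleteSpace H]
    (T : H →L[ℂ] H) : Prop :=
  T ∘L modulus T = modulus T ∘L T

/-- `m_T = inf {⟨Tx,x⟩ : ‖x‖ = 1}` (real part of the inner product). -/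
def mval {H : Type*} [NormedAddCommGroup H] [InnerProductSpace ℂ H]
    (T : H →L[ℂ] H) : ℝ :=
  sInf {r : ℝ | ∃ x : H, ‖x‖ = 1 ∧ r = T.reApplyInnerSelf x}

/-- The set of intertwining values `Λ_int(R,M)`. -/
def intertwiningValues {H K : Type*} [NormedAddCommGroup H] [InnerProductSpace ℂ H]
    [NormedAddCommGroup K] [InnerProductSpace ℂ K]
    (R : H →L[ℂ] H) (M : K →L[ℂ] K) : Set ℂ :=
  {l : ℂ | ∃ X : K →L[ℂ] H, X ≠ 0 ∧ R ∘L X = l • (X ∘L M)}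

/-- The set of extended eigenvalues `σ_ext(T)`. -/
def extSpectrum {H : Type*} [NormedAddCommGroup H] [InnerProductSpace ℂ H]
    (T : H →L[ℂ] H) : Set ℂ :=
  {l : ℂ | ∃ X : H →L[ℂ] H, X ≠ 0 ∧ T ∘L X = l • (X ∘L T)}

/-- The set `𝒜_r(R,A)` of operators `L` with `‖Rⁿ(Lx)‖ ≤ c·rⁿ·‖Aⁿx‖` for all `n, x`. -/
def calA {H 𝔏 : Type*} [NormedAddCommGroup H] [InnerProductSpace ℂ H]
    [NormedAddCommGroup 𝔏] [InnerProductSpace ℂ 𝔏]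
    (r : ℝ) (R : H →L[ℂ] H) (A : 𝔏 →L[ℂ] 𝔏) : Set (𝔏 →L[ℂ] H) :=
  {L : 𝔏 →L[ℂ] H | ∃ c : ℝ, 0 ≤ c ∧
    ∀ (n : ℕ) (x : 𝔏), ‖(R ^ n) (L x)‖ ≤ c * r ^ n * ‖(A ^ n) x‖}

/-- An operator is pure if it has no nonzero reducing subspace on which it is normal. -/
def IsPure {H : Type*} [NormedAddCommGroup H] [InnerProductSpace ℂ H] [CompleteSpace H]
    (T : H →L[ℂ] H) : Prop :=
  ∀ M : Submodule ℂ H, IsClosed (M : Set H) → (∀ x ∈ M, T x ∈ M) →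
    (∀ x ∈ M, adjoint T x ∈ M) →
    (∀ x ∈ M, T (adjoint T x) = adjoint T (T x)) → M = ⊥

universe u

/-- An operator is subnormal if it has a normal extension on a larger Hilbert space. -/
def IsSubnormal {F : Type*} [NormedAddCommGroup F] [InnerProductSpace ℂ F] [CompleteSpace F]
    (T : F →L[ℂ] F) : Prop :=
  ∃ (K : Type u) (_ : NormedAddCommGroup K) (_ : InnerProductSpace ℂ K) (_ : CompleteSpace K)
    (j : F →ₗᵢ[ℂ] K) (M : K →L[ℂ] K),
      adjoint M ∘L M = M ∘L adjoint M ∧ ∀ x : F, M (j x) = j (T x)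

end

/-!
Let `U_θ` be the unitary group multiplying the `n`-th coordinate by `e^{2πinθ}`. For every bounded
`X` the orbit `θ ↦ U_θ X U_{-θ}` is strongly continuous and its Fourier coefficients are the
diagonals of the operator matrix of `X`. A functional continuous for the weak operator topology
which kills all diagonals of `X` turns the orbit into a continuous function on the circle with
vanishing Fourier coefficients; this function is zero, in particular at `θ = 0`. By Hahn–Banach,
`X` lies in the weak operator closure of the span of its diagonals.

If `T X = l X T` with `T = A ⊗ S`, then `Tᵏ X = lᵏ X Tᵏ` expresses the `k`-th column of `X` through
the `0`-th one. Hence `X` is lower triangular and its `m`-th diagonal is `(I ⊗ Sᵐ) D`, where `D` is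
built from the entry `L` of `X` in row `m` and column `0`. The norm of `Tⁿ X = lⁿ X Tⁿ` on column
`0` gives `‖Aⁿ L v‖ ≤ ‖X‖ |l|ⁿ ‖Aⁿ v‖`.
-/

noncomputable section

open scoped ENNReal

section WeakOperatorClosure

theorem mem_closure_of_forall_dual_eq_zero {𝕜 V : Type*} [RCLike 𝕜] [AddCommGroup V]
    [TopologicalSpace V] [IsTopologicalAddGroup V] [Module ℝ V] [Module 𝕜 V] [IsScalarTower ℝ 𝕜 V]
    [ContinuousSMul 𝕜 V] [LocallyConvexSpace ℝ V] (p : Submodule 𝕜 V) {x : V}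
    (h : ∀ φ : StrongDual 𝕜 V, (∀ y ∈ p, φ y = 0) → φ x = 0) : x ∈ closure (p : Set V) := by
  by_contra hx
  have : ContinuousSMul ℝ V := IsScalarTower.continuousSMul 𝕜
  have hconv : Convex ℝ (closure (p : Set V)) := (p.restrictScalars ℝ).convex.closure
  obtain ⟨φ, u, hlt, hux⟩ :=
    RCLike.geometric_hahn_banach_closed_point (𝕜 := 𝕜) hconv isClosed_closure hx
  have hφ : ∀ y ∈ p, φ y = 0 := by
    intro y hy
    by_contra hne
    have := hlt (((u : 𝕜) / φ y) • y) (subset_closure (p.smul_mem _ hy))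
    simp [hne] at this
  have hu : 0 < u := by simpa using hlt 0 (subset_closure p.zero_mem)
  rw [h φ hφ] at hux
  simp only [map_zero] at hux
  exact hux.not_gt hu

variable {E F : Type*} [AddCommGroup E] [Module ℂ E] [TopologicalSpace E]
  [AddCommGroup F] [Module ℂ F] [TopologicalSpace F] [IsTopologicalAddGroup F]
  [ContinuousConstSMul ℂ F]

/-- The closure of a set of bounded operators in the weak operator topology. Mathlib puts this
topology on the type copy `E →WOT[ℂ] F`, so the closure is transported along `linearEquiv`. -/
def wotClosure (s : Set (E →L[ℂ] F)) : Set (E →L[ℂ] F) :=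
  ⇑(ContinuousLinearMapWOT.linearEquiv (σ := RingHom.id ℂ) (E := E) (F := F) ℂ).symm ⁻¹'
    closure (⇑(ContinuousLinearMapWOT.linearEquiv (σ := RingHom.id ℂ) (E := E) (F := F) ℂ).symm ''
      s)

/-- The functional `Y ↦ φ (Y x)` attached to a pair `(x, φ)`; these functionals induce the weak
operator topology. -/
def matrixCoefficient (a : E × StrongDual ℂ F) : (E →WOT[ℂ] F) →ₗ[ℂ] ℂ :=
  LinearMap.proj a ∘ₗ ContinuousLinearMapWOT.inducingFn (RingHom.id ℂ) E F

theorem dual_mem_span_matrixCoefficient (φ : StrongDual ℂ (E →WOT[ℂ] F)) :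
    (φ : (E →WOT[ℂ] F) →ₗ[ℂ] ℂ) ∈ Submodule.span ℂ (Set.range matrixCoefficient) := by
  rw [LinearMap.mem_span_iff_continuous]
  convert φ.continuous using 1
  · exact (induced_to_pi _).symm
  · rfl

/-- The operators `X` intertwining `T` and `S` up to the factor `l`, that is `T X = l X S`. For
`T = S` this is the extended eigenspace `E_ext(T, l)`. -/
def intertwiners (T : F →L[ℂ] F) (S : E →L[ℂ] E) (l : ℂ) : Submodule ℂ (E →L[ℂ] F) where
  carrier := {X | T ∘L X = l • (X ∘L S)}
  zero_mem' := by simp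
  add_mem' {X Y} hX hY := by
    simp only [Set.mem_ofPred_eq] at *
    rw [comp_add, add_comp, smul_add, hX, hY]
  smul_mem' c X hX := by
    simp only [Set.mem_ofPred_eq] at *
    rw [comp_smul, smul_comp, hX, smul_comm]

theorem mem_intertwiners_iff {T : F →L[ℂ] F} {S : E →L[ℂ] E} {l : ℂ} {X : E →L[ℂ] F} :
    X ∈ intertwiners T S l ↔ ∀ x, T (X x) = l • X (S x) :=
  ContinuousLinearMap.ext_iff

theorem pow_mem_intertwiners {T : F →L[ℂ] F} {S : E →L[ℂ] E} {l : ℂ} {X : E →L[ℂ] F}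
    (hX : X ∈ intertwiners T S l) (k : ℕ) : X ∈ intertwiners (T ^ k) (S ^ k) (l ^ k) := by
  rw [mem_intertwiners_iff] at hX ⊢
  intro x
  induction k with
  | zero => simp
  | succ k ih =>
    rw [pow_succ', mul_apply_eq_comp, ih, map_smul, hX, smul_smul, pow_succ' S,
      mul_apply_eq_comp, pow_succ]

theorem wotClosure_subset_intertwiners [SeparatingDual ℂ F] {T : F →L[ℂ] F} {S : E →L[ℂ] E} {l : ℂ}
    {s : Set (E →L[ℂ] F)} (hs : s ⊆ intertwiners T S l) : wotClosure s ⊆ intertwiners T S l := by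
  let C := {Y : E →WOT[ℂ] F |
    (ContinuousLinearMapWOT.ofCLM T).comp Y = l • Y.comp (ContinuousLinearMapWOT.ofCLM S)}
  have hclosed : IsClosed C := isClosed_eq (by fun_prop) (by fun_prop)
  have hsub : (ContinuousLinearMapWOT.linearEquiv ℂ).symm '' s ⊆ C := by
    rintro _ ⟨Y, hY, rfl⟩
    exact congrArg ContinuousLinearMapWOT.ofCLM (hs hY)
  exact fun X hX ↦ congrArg ContinuousLinearMapWOT.toCLM (closure_minimal hsub hclosed hX)

end WeakOperatorClosure

section FourierCoefficients

open AddCircle MeasureTheory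

variable {T : ℝ} [Fact (0 < T)]

theorem integrable_haarAddCircle_of_continuous {E : Type*} [NormedAddCommGroup E]
    {f : AddCircle T → E} (hf : Continuous f) : Integrable f haarAddCircle :=
  hf.integrable_of_hasCompactSupport (HasCompactSupport.of_compactSpace f)

theorem eq_zero_of_fourierCoeff_eq_zero {f : C(AddCircle T, ℂ)} (h : ∀ m, fourierCoeff f m = 0) :
    f = 0 := by
  have hsum : HasSum (fun m ↦ fourierCoeff f m • fourier m) f :=
    hasSum_fourier_series_of_summable (by simp [funext h, summable_zero])
  simpa [h] using hsum.unique (by simp [h, hasSum_zero])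

variable {E F : Type*} [NormedAddCommGroup E] [NormedSpace ℂ E]
  [NormedAddCommGroup F] [NormedSpace ℂ F]

theorem fourierCoeff_map [CompleteSpace E] [CompleteSpace F] (L : E →L[ℂ] F) {f : AddCircle T → E}
    (hf : Continuous f) (m : ℤ) :
    fourierCoeff (fun θ ↦ L (f θ)) m = L (fourierCoeff f m) := by
  simp only [fourierCoeff, ← map_smul]
  exact L.integral_comp_comm ((integrable_haarAddCircle_of_continuous hf).fourier_smul _)

theorem fourierCoeff_fourier_smul_const [CompleteSpace E] (n m : ℤ) (v : E) :
    fourierCoeff (fun θ : AddCircle T ↦ fourier n θ • v) m = if n = m then v else 0 := by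
  have hmap := fourierCoeff_map (ContinuousLinearMap.toSpanSingleton ℂ v)
    (fourier (T := T) n).continuous m
  rw [fourierCoeff_fourier, Pi.single_apply] at hmap
  simpa [-fourier_apply, eq_comm (a := m)] using hmap

theorem norm_fourierCoeff_le {f : AddCircle T → E} {C : ℝ} (hf : ∀ θ, ‖f θ‖ ≤ C) (m : ℤ) :
    ‖fourierCoeff f m‖ ≤ C := by
  have hbound : ∀ θ, ‖fourier (-m) θ • f θ‖ ≤ C := fun θ ↦ by
    rw [norm_smul, fourier_apply, Circle.norm_coe, one_mul]
    exact hf θ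
  simpa [fourierCoeff, -fourier_apply] using
    norm_integral_le_of_norm_le_const (μ := haarAddCircle) (.of_forall hbound)

theorem mem_wotClosure_of_fourierCoeff_mem [CompleteSpace F] {G : AddCircle T → E →L[ℂ] F}
    (hG : ∀ x, Continuous fun θ ↦ G θ x) {p : Submodule ℂ (E →L[ℂ] F)} {D : ℤ → E →L[ℂ] F}
    (hD : ∀ m x, D m x = fourierCoeff (fun θ ↦ G θ x) m) (hp : ∀ m, D m ∈ p) (θ : AddCircle T) :
    G θ ∈ wotClosure p := by
  let ι := (ContinuousLinearMapWOT.linearEquiv (σ := RingHom.id ℂ) (E := E) (F := F) ℂ).symm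
  have hcoeff : ∀ φ ∈ Submodule.span ℂ (Set.range (matrixCoefficient (E := E) (F := F))),
      Continuous (fun θ ↦ φ (ι (G θ))) ∧
        ∀ m, fourierCoeff (fun θ ↦ φ (ι (G θ))) m = φ (ι (D m)) := by
    intro φ hφ
    induction hφ using Submodule.span_induction with
    | mem φ hφ =>
      obtain ⟨⟨x, ψ⟩, rfl⟩ := hφ
      refine ⟨ψ.continuous.comp (hG x), fun m ↦ ?_⟩
      exact (fourierCoeff_map ψ (hG x) m).trans (congrArg ψ (hD m x).symm)
    | zero => exact ⟨by simpa using continuous_const, fun m ↦ by simp [fourierCoeff]⟩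
    | add φ ψ _ _ hφ hψ =>
      refine ⟨hφ.1.add hψ.1, fun m ↦ ?_⟩
      rw [LinearMap.add_apply, ← hφ.2, ← hψ.2]
      exact congrFun (fourierCoeff.add (integrable_haarAddCircle_of_continuous hφ.1)
        (integrable_haarAddCircle_of_continuous hψ.1)) m
    | smul c φ _ hφ =>
      refine ⟨hφ.1.const_smul c, fun m ↦ ?_⟩
      rw [LinearMap.smul_apply, ← hφ.2]
      exact fourierCoeff.const_smul _ c m
  have hmem : ι (G θ) ∈ closure (p.map ι.toLinearMap : Set (E →WOT[ℂ] F)) := by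
    refine mem_closure_of_forall_dual_eq_zero _ fun φ hφ ↦ ?_
    obtain ⟨hcont, hfourier⟩ := hcoeff φ (dual_mem_span_matrixCoefficient φ)
    have hzero : (⟨_, hcont⟩ : C(AddCircle T, ℂ)) = 0 :=
      eq_zero_of_fourierCoeff_eq_zero fun m ↦
        (hfourier m).trans (hφ _ (Submodule.mem_map_of_mem (hp m)))
    exact congrArg (· θ) hzero
  exact hmem

end FourierCoefficients

section CircleAction

variable {E F : Type*} [NormedAddCommGroup E] [NormedSpace ℂ E]
  [NormedAddCommGroup F] [NormedSpace ℂ F] {p q : ℝ≥0∞} [Fact (1 ≤ p)] [Fact (1 ≤ q)]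

/-- The action of the circle on `ℓᵖ` multiplying the `n`-th coordinate by `e^{2πinθ}`. -/
def circleAction (θ : UnitAddCircle) : lp (fun _ : ℕ ↦ E) p →L[ℂ] lp (fun _ : ℕ ↦ E) p :=
  lp.mapCLM p (fun n ↦ fourier n θ • ContinuousLinearMap.id ℂ E) zero_le_one fun n ↦ by
    rw [norm_smul, fourier_apply, Circle.norm_coe, one_mul]
    exact norm_id_le

theorem circleAction_apply (θ : UnitAddCircle) (x : lp (fun _ : ℕ ↦ E) p) (n : ℕ) :
    circleAction θ x n = fourier n θ • x n :=
  rfl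

theorem norm_circleAction_apply_le (θ : UnitAddCircle) (x : lp (fun _ : ℕ ↦ E) p) :
    ‖circleAction θ x‖ ≤ ‖x‖ :=
  lp.norm_mono (zero_lt_one.trans_le Fact.out).ne' fun n ↦ by
    rw [circleAction_apply, norm_smul, fourier_apply, Circle.norm_coe, one_mul]

theorem circleAction_zero (x : lp (fun _ : ℕ ↦ E) p) : circleAction 0 x = x := by
  ext n
  rw [circleAction_apply, fourier_eval_zero, one_smul]

theorem circleAction_single (θ : UnitAddCircle) (n : ℕ) (v : E) :
    circleAction θ (lp.single p n v : lp (fun _ : ℕ ↦ E) p) = fourier n θ • lp.single p n v := by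
  ext j
  obtain rfl | hj := eq_or_ne j n
  · rfl
  · simp [circleAction_apply, hj]

theorem continuous_uncurry_circleAction (hp : p ≠ ∞) :
    Continuous fun a : UnitAddCircle × lp (fun _ : ℕ ↦ E) p ↦ circleAction a.1 a.2 := by
  let C : Submodule ℂ (lp (fun _ : ℕ ↦ E) p) :=
    { carrier := {x | Continuous fun θ ↦ circleAction θ x}
      zero_mem' := by simpa using continuous_const
      add_mem' := fun hx hy ↦ (hx.add hy).congr fun θ ↦ (map_add (circleAction θ) _ _).symm
      smul_mem' := fun c x hx ↦
        (hx.const_smul c).congr fun θ ↦ (map_smul (circleAction θ) c x).symm }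
  have hsingle (n : ℕ) (v : E) : lp.single p n v ∈ C := by
    change Continuous fun θ ↦ circleAction θ (lp.single p n v : lp (fun _ : ℕ ↦ E) p)
    simp only [circleAction_single]
    exact (fourier (T := 1) n).continuous.smul continuous_const
  have hdense : Dense (C : Set (lp (fun _ : ℕ ↦ E) p)) := fun x ↦
    mem_closure_of_tendsto (lp.hasSum_single hp x)
      (.of_forall fun s ↦ C.sum_mem fun n _ ↦ hsingle n (x n))
  have hlip (θ : UnitAddCircle) :
      LipschitzWith 1 fun x : lp (fun _ : ℕ ↦ E) p ↦ circleAction θ x :=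
    LipschitzWith.mk_one fun x y ↦ by
      rw [dist_eq_norm, dist_eq_norm, ← map_sub]
      exact norm_circleAction_apply_le θ (x - y)
  exact continuous_prod_of_dense_continuous_lipschitzWith' _ 1 hdense hlip fun _ hx ↦ hx

/-- The conjugate `U_θ X U_{-θ}` of `X` by the circle action `U`. -/
def circleConj (X : lp (fun _ : ℕ ↦ E) p →L[ℂ] lp (fun _ : ℕ ↦ F) q) (θ : UnitAddCircle) :
    lp (fun _ : ℕ ↦ E) p →L[ℂ] lp (fun _ : ℕ ↦ F) q :=
  circleAction θ ∘L X ∘L circleAction (-θ)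

variable (X : lp (fun _ : ℕ ↦ E) p →L[ℂ] lp (fun _ : ℕ ↦ F) q)

theorem circleConj_zero : circleConj X 0 = X := by
  ext x : 1
  simp only [circleConj, comp_apply, neg_zero, circleAction_zero]

theorem norm_circleConj_apply_le (θ : UnitAddCircle) (x : lp (fun _ : ℕ ↦ E) p) :
    ‖circleConj X θ x‖ ≤ ‖X‖ * ‖x‖ := calc
  ‖circleConj X θ x‖ ≤ ‖X (circleAction (-θ) x)‖ := norm_circleAction_apply_le θ _
  _ ≤ ‖X‖ * ‖circleAction (-θ) x‖ := X.le_opNorm _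
  _ ≤ ‖X‖ * ‖x‖ := by gcongr; exact norm_circleAction_apply_le _ x

theorem continuous_circleConj_apply (hp : p ≠ ∞) (hq : q ≠ ∞) (x : lp (fun _ : ℕ ↦ E) p) :
    Continuous fun θ ↦ circleConj X θ x := by
  have hinner : Continuous fun θ ↦ X (circleAction (-θ) x) :=
    X.continuous.comp
      ((continuous_uncurry_circleAction hp).comp (continuous_neg.prodMk continuous_const))
  exact (continuous_uncurry_circleAction hq).comp (continuous_id.prodMk hinner)

theorem circleConj_single_apply (θ : UnitAddCircle) (k : ℕ) (v : E) (j : ℕ) :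
    circleConj X θ (lp.single p k v) j = fourier (j - k : ℤ) θ • X (lp.single p k v) j := by
  change circleAction θ (X (circleAction (-θ) (lp.single p k v))) j = _
  rw [circleAction_single, map_smul, circleAction_apply, lp.coeFn_smul, Pi.smul_apply, smul_smul,
    sub_eq_add_neg, fourier_add]
  simp

/-- The `m`-th diagonal of the operator matrix of `X`, whose `(j, k)` entry is that of `X` if
`j - k = m` and zero otherwise. It is encoded as the `m`-th Fourier coefficient of the orbit
`θ ↦ U_θ X U_{-θ}`, which makes it bounded. -/
def fourierDiagonal (hp : p ≠ ∞) (hq : q ≠ ∞) [CompleteSpace F] (m : ℤ) :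
    lp (fun _ : ℕ ↦ E) p →L[ℂ] lp (fun _ : ℕ ↦ F) q :=
  LinearMap.mkContinuous
    { toFun x := fourierCoeff (fun θ ↦ circleConj X θ x) m
      map_add' x y := by
        simp only [map_add]
        exact congrFun (fourierCoeff.add
          (integrable_haarAddCircle_of_continuous (continuous_circleConj_apply X hp hq x))
          (integrable_haarAddCircle_of_continuous (continuous_circleConj_apply X hp hq y))) m
      map_smul' c x := by
        simp only [map_smul]
        exact fourierCoeff.const_smul _ c m }
    ‖X‖ fun x ↦ norm_fourierCoeff_le (fun θ ↦ norm_circleConj_apply_le X θ x) m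

variable (hp : p ≠ ∞) (hq : q ≠ ∞) [CompleteSpace F]

theorem fourierDiagonal_apply (m : ℤ) (x : lp (fun _ : ℕ ↦ E) p) :
    fourierDiagonal X hp hq m x = fourierCoeff (fun θ ↦ circleConj X θ x) m :=
  rfl

theorem fourierDiagonal_single_apply (m : ℤ) (k : ℕ) (v : E) (j : ℕ) :
    fourierDiagonal X hp hq m (lp.single p k v) j =
      if (j - k : ℤ) = m then X (lp.single p k v) j else 0 := calc
  fourierDiagonal X hp hq m (lp.single p k v) j
    = fourierCoeff (fun θ ↦ circleConj X θ (lp.single p k v) j) m :=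
      (fourierCoeff_map (lp.evalCLM ℂ (fun _ : ℕ ↦ F) q j)
        (continuous_circleConj_apply X hp hq _) m).symm
  _ = fourierCoeff (fun θ : UnitAddCircle ↦ fourier (j - k : ℤ) θ • X (lp.single p k v) j) m := by
      simp only [circleConj_single_apply]
  _ = if (j - k : ℤ) = m then X (lp.single p k v) j else 0 :=
      fourierCoeff_fourier_smul_const ..

theorem fourierDiagonal_apply_of_sub_eq {m : ℤ} {j k : ℕ} (h : (j - k : ℤ) = m)
    (x : lp (fun _ : ℕ ↦ E) p) : fourierDiagonal X hp hq m x j = X (lp.single p k (x k)) j := by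
  let ev := lp.evalCLM ℂ (fun _ : ℕ ↦ F) q j
  have hcomp : ev ∘L fourierDiagonal X hp hq m =
      ev ∘L X ∘L lp.singleContinuousLinearMap ℂ (fun _ : ℕ ↦ E) p k ∘L
        lp.evalCLM ℂ (fun _ : ℕ ↦ E) p k := by
    refine lp.ext_continuousLinearMap hp fun i ↦ ContinuousLinearMap.ext fun v ↦ ?_
    change fourierDiagonal X hp hq m (lp.single p i v) j =
      X (lp.single p k ((lp.single p i v : lp (fun _ : ℕ ↦ E) p) k)) j
    rw [fourierDiagonal_single_apply]
    obtain rfl | hik := eq_or_ne i k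
    · rw [if_pos h, lp.single_apply_self]
    · rw [if_neg (by lia), lp.single_apply_ne _ _ _ hik.symm, lp.single_zero, map_zero]
      rfl
  exact DFunLike.congr_fun hcomp x

theorem fourierDiagonal_apply_eq_zero {m : ℤ} {j : ℕ} (h : ∀ k : ℕ, (j - k : ℤ) ≠ m)
    (x : lp (fun _ : ℕ ↦ E) p) : fourierDiagonal X hp hq m x j = 0 := by
  have hcomp : lp.evalCLM ℂ (fun _ : ℕ ↦ F) q j ∘L fourierDiagonal X hp hq m = 0 := by
    refine lp.ext_continuousLinearMap hp fun i ↦ ContinuousLinearMap.ext fun v ↦ ?_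
    exact (fourierDiagonal_single_apply X hp hq m i v j).trans (if_neg (h i))
  exact DFunLike.congr_fun hcomp x

variable {X} in
theorem fourierDiagonal_eq_zero_of_neg
    (hX : ∀ (k : ℕ) (v : E) (j : ℕ), j < k → X (lp.single p k v) j = 0) {m : ℤ} (hm : m < 0) :
    fourierDiagonal X hp hq m = 0 := by
  refine ContinuousLinearMap.ext fun x ↦ lp.ext <| funext fun j ↦ ?_
  obtain ⟨k, hk⟩ : ∃ k : ℕ, (j - k : ℤ) = m := ⟨(j - m).toNat, by lia⟩
  rw [fourierDiagonal_apply_of_sub_eq X hp hq hk, hX k _ j (by lia)]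
  rfl

variable {X} in
theorem mem_wotClosure_of_fourierDiagonal_mem
    {M : Submodule ℂ (lp (fun _ : ℕ ↦ E) p →L[ℂ] lp (fun _ : ℕ ↦ F) q)}
    (h : ∀ m, fourierDiagonal X hp hq m ∈ M) : X ∈ wotClosure M := by
  rw [← circleConj_zero X]
  exact mem_wotClosure_of_fourierCoeff_mem (continuous_circleConj_apply X hp hq)
    (fourierDiagonal_apply X hp hq) h 0

end CircleAction

section TensorShift

variable {E F : Type*} [NormedAddCommGroup E] [NormedSpace ℂ E]
  [NormedAddCommGroup F] [NormedSpace ℂ F] {p q : ℝ≥0∞} [Fact (1 ≤ p)] [Fact (1 ≤ q)]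

/-- `T` is the tensor product `A ⊗ S` of `A` with the unilateral shift `S` on `ℓᵖ`. -/
def IsTensorShift (A : E →L[ℂ] E) (T : lp (fun _ : ℕ ↦ E) p →L[ℂ] lp (fun _ : ℕ ↦ E) p) : Prop :=
  ∀ x, T x 0 = 0 ∧ ∀ n : ℕ, T x (n + 1) = A (x n)

namespace IsTensorShift

variable {A : E →L[ℂ] E} {T : lp (fun _ : ℕ ↦ E) p →L[ℂ] lp (fun _ : ℕ ↦ E) p}
  (hT : IsTensorShift A T)
include hT

theorem pow_apply_add (k : ℕ) (x : lp (fun _ : ℕ ↦ E) p) (n : ℕ) :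
    (T ^ k) x (n + k) = (A ^ k) (x n) := by
  induction k with
  | zero => rfl
  | succ k ih =>
    rw [pow_succ', pow_succ', mul_apply_eq_comp, mul_apply_eq_comp, ← add_assoc, (hT _).2, ih]

theorem pow_apply_of_lt {k n : ℕ} (h : n < k) (x : lp (fun _ : ℕ ↦ E) p) : (T ^ k) x n = 0 := by
  induction k generalizing n with
  | zero => exact absurd h n.not_lt_zero
  | succ k ih =>
    rw [pow_succ', mul_apply_eq_comp]
    cases n with
    | zero => exact (hT _).1
    | succ n => rw [(hT _).2, ih (Nat.succ_lt_succ_iff.1 h), map_zero]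

theorem pow_single_zero (k : ℕ) (v : E) :
    (T ^ k) (lp.single p 0 v) = lp.single p k ((A ^ k) v) := by
  ext j
  obtain hjk | ⟨n, rfl⟩ := lt_or_ge j k |>.imp_right Nat.exists_eq_add_of_le'
  · rw [hT.pow_apply_of_lt hjk, lp.single_apply_ne _ _ _ hjk.ne]
  · rw [hT.pow_apply_add]
    cases n with
    | zero => rw [zero_add, lp.single_apply_self, lp.single_apply_self]
    | succ n =>
      rw [lp.single_apply_ne _ _ _ n.succ_ne_zero, lp.single_apply_ne _ _ _ (by lia), map_zero]

theorem injective (hA : Function.Injective A) : Function.Injective T := by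
  refine (injective_iff_map_eq_zero T).2 fun x hx ↦ lp.ext <| funext fun n ↦ ?_
  refine (injective_iff_map_eq_zero A).1 hA _ ?_
  rw [← (hT x).2 n, hx]
  rfl

end IsTensorShift

/-- The class `𝒜_r(R, A)` of operators `L` with `‖Rⁿ L x‖ ≤ c rⁿ ‖Aⁿ x‖`, for operators on normed
spaces. -/
def growthClass (r : ℝ) (R : F →L[ℂ] F) (A : E →L[ℂ] E) : Set (E →L[ℂ] F) :=
  {L | ∃ c : ℝ, 0 ≤ c ∧ ∀ (n : ℕ) (x : E), ‖(R ^ n) (L x)‖ ≤ c * r ^ n * ‖(A ^ n) x‖}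

/-- The operators `(I ⊗ Sᵐ) ∘ D` with `m ∈ ℕ`, `L ∈ 𝒜_{|l|}(R, A)` and `D` the diagonal operator
`(D x)ₙ = l⁻ⁿ Rⁿ L Bⁿ xₙ`. The operator `B` stands for the inverse of `A`. -/
def shiftedDiagonals (p q : ℝ≥0∞) [Fact (1 ≤ p)] [Fact (1 ≤ q)] (R : F →L[ℂ] F)
    (A B : E →L[ℂ] E) (l : ℂ) : Set (lp (fun _ : ℕ ↦ E) p →L[ℂ] lp (fun _ : ℕ ↦ F) q) :=
  {X | ∃ (m : ℕ) (L : E →L[ℂ] F), L ∈ growthClass ‖l‖ R A ∧ ∀ x,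
    (∀ j < m, X x j = 0) ∧
      ∀ k : ℕ, X x (k + m) = l ^ (-(k : ℤ)) • (R ^ k) (L ((B ^ k) (x k)))}

variable {A B : E →L[ℂ] E} {R : F →L[ℂ] F} {S : lp (fun _ : ℕ ↦ E) p →L[ℂ] lp (fun _ : ℕ ↦ E) p}
  {T : lp (fun _ : ℕ ↦ F) q →L[ℂ] lp (fun _ : ℕ ↦ F) q} {l : ℂ}

theorem shiftedDiagonals_subset_intertwiners (hS : IsTensorShift A S) (hT : IsTensorShift R T)
    (hBA : B * A = 1) (hl : l ≠ 0) :
    shiftedDiagonals p q R A B l ⊆ intertwiners T S l := by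
  rintro X ⟨m, L, -, hX⟩
  refine mem_intertwiners_iff.2 fun x ↦ lp.ext <| funext fun j ↦ ?_
  change T (X x) j = l • X (S x) j
  have hzero : ∀ j ≤ m, X (S x) j = 0 := by
    intro j hj
    obtain hj | rfl := hj.lt_or_eq
    · exact (hX _).1 j hj
    · simpa [(hS x).1] using (hX (S x)).2 0
  cases j with
  | zero => rw [(hT _).1, hzero 0 m.zero_le, smul_zero]
  | succ j =>
    rw [(hT _).2]
    obtain hj | ⟨k, rfl⟩ := lt_or_ge j m |>.imp_right Nat.exists_eq_add_of_le'
    · rw [(hX x).1 j hj, hzero (j + 1) hj, map_zero, smul_zero]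
    · have hB : (B ^ (k + 1)) (A (x k)) = (B ^ k) (x k) := by
        rw [pow_succ, mul_apply_eq_comp, ← mul_apply_eq_comp B, hBA, one_apply_eq_self]
      have hpow : l * l ^ (-((k + 1 : ℕ) : ℤ)) = l ^ (-(k : ℤ)) := by
        rw [← zpow_one_add₀ hl]
        congr 1
        push_cast
        ring
      rw [add_right_comm, (hX x).2, (hX _).2, (hS x).2, hB, smul_smul, hpow, map_smul, pow_succ',
        mul_apply_eq_comp]

variable {X : lp (fun _ : ℕ ↦ E) p →L[ℂ] lp (fun _ : ℕ ↦ F) q}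

theorem column_entry_mem_growthClass (hS : IsTensorShift A S) (hT : IsTensorShift R T)
    (hX : X ∈ intertwiners T S l) (m : ℕ) :
    lp.evalCLM ℂ (fun _ : ℕ ↦ F) q m ∘L X ∘L lp.singleContinuousLinearMap ℂ (fun _ : ℕ ↦ E) p 0 ∈
      growthClass ‖l‖ R A := by
  refine ⟨‖X‖, norm_nonneg X, fun n v ↦ ?_⟩
  have hp : 0 < p := zero_lt_one.trans_le Fact.out
  have hq : q ≠ 0 := (zero_lt_one.trans_le Fact.out).ne'
  calc
    ‖(R ^ n) (X (lp.single p 0 v) m)‖ = ‖(T ^ n) (X (lp.single p 0 v)) (m + n)‖ := by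
      rw [hT.pow_apply_add]
    _ ≤ ‖(T ^ n) (X (lp.single p 0 v))‖ := lp.norm_apply_le_norm hq _ _
    _ = ‖l‖ ^ n * ‖X (lp.single p n ((A ^ n) v))‖ := by
      rw [mem_intertwiners_iff.1 (pow_mem_intertwiners hX n), norm_smul, norm_pow,
        hS.pow_single_zero]
    _ ≤ ‖l‖ ^ n * (‖X‖ * ‖(A ^ n) v‖) := by
      gcongr
      exact (X.le_opNorm _).trans_eq (by rw [lp.norm_single hp])
    _ = ‖X‖ * ‖l‖ ^ n * ‖(A ^ n) v‖ := by ring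

theorem apply_single_of_mem_intertwiners (hS : IsTensorShift A S) (hAB : A * B = 1) (hl : l ≠ 0)
    (hX : X ∈ intertwiners T S l) (k : ℕ) (v : E) :
    X (lp.single p k v) = l ^ (-(k : ℤ)) • (T ^ k) (X (lp.single p 0 ((B ^ k) v))) := by
  rw [mem_intertwiners_iff.1 (pow_mem_intertwiners hX k), hS.pow_single_zero, ← mul_apply_eq_comp,
    pow_mul_pow_eq_one k hAB, one_apply_eq_self, zpow_neg, zpow_natCast,
    inv_smul_smul₀ (pow_ne_zero k hl)]

variable [CompleteSpace F]

theorem fourierDiagonal_natCast_mem_shiftedDiagonals (hp : p ≠ ∞) (hq : q ≠ ∞)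
    (hS : IsTensorShift A S) (hT : IsTensorShift R T) (hAB : A * B = 1) (hl : l ≠ 0)
    (hX : X ∈ intertwiners T S l) (m : ℕ) :
    fourierDiagonal X hp hq m ∈ shiftedDiagonals p q R A B l := by
  refine ⟨m, _, column_entry_mem_growthClass hS hT hX m, fun x ↦ ⟨fun j hj ↦ ?_, fun k ↦ ?_⟩⟩
  · exact fourierDiagonal_apply_eq_zero X hp hq (by lia) x
  · have hentry : fourierDiagonal X hp hq m x (k + m) = X (lp.single p k (x k)) (k + m) :=
      fourierDiagonal_apply_of_sub_eq X hp hq (by push_cast; ring) x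
    rw [hentry, apply_single_of_mem_intertwiners hS hAB hl hX, add_comm k m]
    exact congrArg (l ^ (-(k : ℤ)) • ·) (hT.pow_apply_add k _ m)

theorem fourierDiagonal_mem_span_shiftedDiagonals (hp : p ≠ ∞) (hq : q ≠ ∞)
    (hS : IsTensorShift A S) (hT : IsTensorShift R T) (hAB : A * B = 1) (hl : l ≠ 0)
    (hX : X ∈ intertwiners T S l) (m : ℤ) :
    fourierDiagonal X hp hq m ∈ Submodule.span ℂ (shiftedDiagonals p q R A B l) := by
  obtain ⟨m, rfl⟩ | hm := le_or_gt 0 m |>.imp_left Int.eq_ofNat_of_zero_le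
  · exact Submodule.subset_span
      (fourierDiagonal_natCast_mem_shiftedDiagonals hp hq hS hT hAB hl hX m)
  · have htriangular (k : ℕ) (v : E) (j : ℕ) (hjk : j < k) : X (lp.single p k v) j = 0 := by
      rw [apply_single_of_mem_intertwiners hS hAB hl hX, lp.coeFn_smul, Pi.smul_apply,
        hT.pow_apply_of_lt hjk, smul_zero]
    rw [fourierDiagonal_eq_zero_of_neg hp hq htriangular hm]
    exact zero_mem _

theorem extended_eigenspace_eq_weakStar_closure_span_general (hp : p ≠ ∞) (hq : q ≠ ∞)
    (hS : IsTensorShift A S) (hT : IsTensorShift R T) (hAB : A * B = 1) (hBA : B * A = 1)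
    (hl : l ≠ 0) :
    (intertwiners T S l : Set (lp (fun _ : ℕ ↦ E) p →L[ℂ] lp (fun _ : ℕ ↦ F) q)) =
      wotClosure (Submodule.span ℂ (shiftedDiagonals p q R A B l)) := by
  apply Set.Subset.antisymm
  · exact fun X hX ↦ mem_wotClosure_of_fourierDiagonal_mem hp hq
      (fourierDiagonal_mem_span_shiftedDiagonals hp hq hS hT hAB hl hX)
  · exact wotClosure_subset_intertwiners
      (Submodule.span_le.2 (shiftedDiagonals_subset_intertwiners hS hT hBA hl))

end TensorShift

theorem zero_notMem_extSpectrum {H : Type*} [NormedAddCommGroup H] [InnerProductSpace ℂ H]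
    {T : H →L[ℂ] H} (hT : Function.Injective T) : 0 ∉ extSpectrum T := by
  rintro ⟨X, hX, hTX⟩
  refine hX <| ContinuousLinearMap.ext fun x ↦ hT ?_
  simpa using DFunLike.congr_fun hTX x

end

theorem extended_eigenspace_eq_weakStar_closure_span
    {𝔏 : Type*} [NormedAddCommGroup 𝔏] [InnerProductSpace ℂ 𝔏] [CompleteSpace 𝔏]
    (A : 𝔏 →L[ℂ] 𝔏) (hApos : A.IsPositive)
    (B : 𝔏 →L[ℂ] 𝔏) (hAB : A ∘L B = 1) (hBA : B ∘L A = 1)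
    (AS : lp (fun _ : ℕ => 𝔏) 2 →L[ℂ] lp (fun _ : ℕ => 𝔏) 2)
    (hAS : ∀ x : lp (fun _ : ℕ => 𝔏) 2,
      (AS x) 0 = 0 ∧ ∀ n : ℕ, (AS x) (n + 1) = A (x n))
    (l : ℂ) (hl : l ∈ extSpectrum AS) :
    {X : lp (fun _ : ℕ => 𝔏) 2 →L[ℂ] lp (fun _ : ℕ => 𝔏) 2 | AS ∘L X = l • (X ∘L AS)} =
      ⇑(ContinuousLinearMapWOT.linearEquiv (σ := RingHom.id ℂ) (E := lp (fun _ : ℕ => 𝔏) 2) (F := lp (fun _ : ℕ => 𝔏) 2) ℂ).symm ⁻¹'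
        closure (⇑(ContinuousLinearMapWOT.linearEquiv (σ := RingHom.id ℂ) (E := lp (fun _ : ℕ => 𝔏) 2) (F := lp (fun _ : ℕ => 𝔏) 2) ℂ).symm ''
          (Submodule.span ℂ
            {X0 : lp (fun _ : ℕ => 𝔏) 2 →L[ℂ] lp (fun _ : ℕ => 𝔏) 2 |
              ∃ (m : ℕ) (L : 𝔏 →L[ℂ] 𝔏), L ∈ calA ‖l‖ A A ∧
                ∀ x : lp (fun _ : ℕ => 𝔏) 2,
                  (∀ j : ℕ, j < m → (X0 x) j = 0) ∧
                  ∀ k : ℕ, (X0 x) (k + m) =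
                    l ^ (-(k : ℤ)) • (A ^ k) (L ((B ^ k) (x k)))} : Set _)) := by
  have hinj : Function.Injective AS :=
    IsTensorShift.injective hAS (Function.LeftInverse.injective fun x ↦ DFunLike.congr_fun hBA x)
  exact extended_eigenspace_eq_weakStar_closure_span_general ENNReal.ofNat_ne_top
    ENNReal.ofNat_ne_top hAS hAS hAB hBA (ne_of_mem_of_not_mem hl (zero_notMem_extSpectrum hinj))
end

section
/- Let α > β > γ > 0 be real numbers and λ ∈ ℂ with α/β = β/γ = |λ|. Let A be the positive operator on ℂ³ given by the diagonal matrix diag(α,β,γ), let L₁ be the operator on ℂ³ whose matrix has a 1 in entry (1,2) and 0 elsewhere, and let L₂ be the operator whose matrix has a 1 in entry (2,3) and 0 elsewhere. Then L₁ ∈ 𝒜_{|λ|}(A) and L₂ ∈ 𝒜_{|λ|}(A), but L₁∘L₂ ∉ 𝒜_{|λ|}(A); in particular, for |λ| > 1 the set 𝒜_{|λ|}(A) need not be closed under multiplication. -/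
open ContinuousLinearMap

/-!
The matrix unit `E i j` shifts eigenvalues of a diagonal operator: `A * E i j = d i • E i j` and
`E i j * A = d j • E i j`. Hence the inequality defining `calA r A A` compares the sequences
`‖d i‖ ^ n` and `(r * ‖d j‖) ^ n`, and `E i j` belongs to `calA r A A` exactly when
`‖d i‖ ≤ r * ‖d j‖`. For a geometric progression `d` of ratio `r⁻¹`, one step along the progression
costs exactly a factor `r`, while two steps cost `r ^ 2 > r`.
-/

theorem le_of_forall_pow_le_mul_pow {K : Type*} [Field K] [LinearOrder K] [IsStrictOrderedRing K]
    [Archimedean K] {a b c : K} (hb : 0 ≤ b) (h : ∀ n : ℕ, a ^ n ≤ c * b ^ n) : a ≤ b := by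
  by_contra! hba
  rcases hb.eq_or_lt with rfl | hb
  · exact hba.not_ge (by simpa using h 1)
  · obtain ⟨n, hn⟩ := pow_unbounded_of_one_lt c ((one_lt_div hb).mpr hba)
    rw [div_pow, lt_div_iff₀ (pow_pos hb n)] at hn
    exact hn.not_ge (h n)

section Powers

variable {𝕜 E F : Type*} [CommSemiring 𝕜]
  [AddCommMonoid E] [TopologicalSpace E] [Module 𝕜 E]
  [AddCommMonoid F] [TopologicalSpace F] [Module 𝕜 F]

theorem pow_apply_of_apply_eq_smul {T : E →L[𝕜] E} {μ : 𝕜} {v : E} (hv : T v = μ • v) (n : ℕ) :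
    (T ^ n) v = μ ^ n • v := by
  induction n with
  | zero => simp
  | succ n ih => rw [pow_succ, mul_apply_eq_comp, hv, map_smul, ih, smul_smul, ← pow_succ']

theorem apply_pow_of_comp_eq_smul [ContinuousConstSMul 𝕜 F] {A : E →L[𝕜] E} {L : E →L[𝕜] F}
    {ν : 𝕜} (hA : L ∘L A = ν • L) (n : ℕ) (x : E) : L ((A ^ n) x) = ν ^ n • L x := by
  induction n with
  | zero => simp
  | succ n ih =>
    rw [pow_succ', mul_apply_eq_comp, ← comp_apply, hA, smul_apply, ih, smul_smul, ← pow_succ']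

end Powers

section Eigenvalues

variable {H 𝔏 : Type*} [NormedAddCommGroup H] [InnerProductSpace ℂ H]
  [NormedAddCommGroup 𝔏] [InnerProductSpace ℂ 𝔏]
  {r : ℝ} {R : H →L[ℂ] H} {A : 𝔏 →L[ℂ] 𝔏} {L : 𝔏 →L[ℂ] H} {μ ν : ℂ}

theorem mem_calA_of_comp_eq_smul (hr : 0 ≤ r) (hR : R ∘L L = μ • L) (hA : L ∘L A = ν • L)
    (hμν : ‖μ‖ ≤ r * ‖ν‖) : L ∈ calA r R A := by
  refine ⟨‖L‖, norm_nonneg L, fun n x ↦ ?_⟩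
  calc ‖(R ^ n) (L x)‖ = ‖μ‖ ^ n * ‖L x‖ := by
        have hRx : R (L x) = μ • L x := DFunLike.congr_fun hR x
        rw [pow_apply_of_apply_eq_smul hRx, norm_smul, norm_pow]
    _ ≤ (r * ‖ν‖) ^ n * ‖L x‖ := by gcongr
    _ = r ^ n * ‖L ((A ^ n) x)‖ := by
        rw [apply_pow_of_comp_eq_smul hA, norm_smul, norm_pow, mul_pow, mul_assoc]
    _ ≤ r ^ n * (‖L‖ * ‖(A ^ n) x‖) := by gcongr; exact L.le_opNorm _
    _ = ‖L‖ * r ^ n * ‖(A ^ n) x‖ := by ring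

theorem norm_le_mul_norm_of_mem_calA (hr : 0 ≤ r) (hL : L ∈ calA r R A) {w : 𝔏}
    (hA : A w = ν • w) (hR : R (L w) = μ • L w) (hw : L w ≠ 0) : ‖μ‖ ≤ r * ‖ν‖ := by
  obtain ⟨c, -, hc⟩ := hL
  refine le_of_forall_pow_le_mul_pow (c := c * ‖w‖ / ‖L w‖) (by positivity) fun n ↦ ?_
  have hn : ‖μ‖ ^ n * ‖L w‖ ≤ c * r ^ n * (‖ν‖ ^ n * ‖w‖) := by
    simpa only [pow_apply_of_apply_eq_smul hR, pow_apply_of_apply_eq_smul hA, norm_smul, norm_pow]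
      using hc n w
  rw [div_mul_eq_mul_div, le_div_iff₀ (norm_pos_iff.mpr hw), mul_pow]
  linarith

end Eigenvalues

section Diagonal

variable {ι : Type*} [Fintype ι] [DecidableEq ι]

theorem diagonal_mul_single {α : Type*} [NonUnitalNonAssocSemiring α] (d : ι → α) (i j : ι)
    (a : α) : Matrix.diagonal d * Matrix.single i j a = Matrix.single i j (d i * a) := by
  ext k m
  by_cases hk : i = k <;> simp [Matrix.single_apply, hk]

theorem single_mul_diagonal {α : Type*} [NonUnitalNonAssocSemiring α] (d : ι → α) (i j : ι)
    (a : α) : Matrix.single i j a * Matrix.diagonal d = Matrix.single i j (a * d j) := by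
  ext k m
  by_cases hm : j = m <;> simp [Matrix.single_apply, hm]

theorem toEuclideanCLM_single_mem_calA_diagonal_iff {r : ℝ} (hr : 0 ≤ r) (d : ι → ℂ) (i j : ι) :
    Matrix.toEuclideanCLM (𝕜 := ℂ) (Matrix.single i j 1) ∈
        calA r (Matrix.toEuclideanCLM (𝕜 := ℂ) (Matrix.diagonal d))
          (Matrix.toEuclideanCLM (𝕜 := ℂ) (Matrix.diagonal d)) ↔
      ‖d i‖ ≤ r * ‖d j‖ := by
  set A := Matrix.toEuclideanCLM (𝕜 := ℂ) (Matrix.diagonal d)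
  set E := Matrix.toEuclideanCLM (𝕜 := ℂ) (Matrix.single i j 1)
  have hAE : A ∘L E = d i • E := by
    rw [← mul_def, ← map_mul, diagonal_mul_single, ← map_smul, Matrix.smul_single, smul_eq_mul]
  have hEA : E ∘L A = d j • E := by
    rw [← mul_def, ← map_mul, single_mul_diagonal, ← map_smul, Matrix.smul_single, smul_eq_mul,
      mul_comm]
  refine ⟨fun hE ↦ ?_, mem_calA_of_comp_eq_smul hr hAE hEA⟩
  have hA_single : A (EuclideanSpace.single j 1) = d j • EuclideanSpace.single j 1 := by
    ext k
    by_cases hk : k = j <;> simp [A, Matrix.mulVec_diagonal, hk]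
  have hE_single : E (EuclideanSpace.single j 1) = EuclideanSpace.single i 1 := by
    ext k
    simp [E, Matrix.single_apply, eq_comm]
  refine norm_le_mul_norm_of_mem_calA hr hE hA_single
    (DFunLike.congr_fun hAE (EuclideanSpace.single j 1)) ?_
  simp [hE_single]

end Diagonal

theorem calA_not_closed_under_mul
    (α β γ : ℝ) (hαβ : β < α) (hβγ : γ < β) (hγ : 0 < γ)
    (l : ℂ) (h1 : α / β = ‖l‖) (h2 : β / γ = ‖l‖)
    (A : EuclideanSpace ℂ (Fin 3) →L[ℂ] EuclideanSpace ℂ (Fin 3))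
    (hA : ∀ (x : EuclideanSpace ℂ (Fin 3)) (i : Fin 3), A x i = ((![α, β, γ] i : ℝ) : ℂ) * x i)
    (L₁ : EuclideanSpace ℂ (Fin 3) →L[ℂ] EuclideanSpace ℂ (Fin 3))
    (hL₁ : ∀ x : EuclideanSpace ℂ (Fin 3), L₁ x 0 = x 1 ∧ L₁ x 1 = 0 ∧ L₁ x 2 = 0)
    (L₂ : EuclideanSpace ℂ (Fin 3) →L[ℂ] EuclideanSpace ℂ (Fin 3))
    (hL₂ : ∀ x : EuclideanSpace ℂ (Fin 3), L₂ x 0 = 0 ∧ L₂ x 1 = x 2 ∧ L₂ x 2 = 0) :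
    L₁ ∈ calA ‖l‖ A A ∧ L₂ ∈ calA ‖l‖ A A ∧
      L₁ ∘L L₂ ∉ calA ‖l‖ A A := by
  have hβ : 0 < β := hγ.trans hβγ
  have hα : 0 < α := hβ.trans hαβ
  have hα_eq : α = ‖l‖ * β := (div_eq_iff hβ.ne').mp h1
  have hβ_eq : β = ‖l‖ * γ := (div_eq_iff hγ.ne').mp h2
  have hA_diag : A = Matrix.toEuclideanCLM (𝕜 := ℂ) (Matrix.diagonal fun i ↦ ↑(![α, β, γ] i)) := by
    ext x i
    simp [hA, Matrix.mulVec_diagonal]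
  have hL₁_single : L₁ = Matrix.toEuclideanCLM (𝕜 := ℂ) (Matrix.single 0 1 1) := by
    ext x i
    fin_cases i <;> simp [hL₁, Matrix.single_mulVec_eq]
  have hL₂_single : L₂ = Matrix.toEuclideanCLM (𝕜 := ℂ) (Matrix.single 1 2 1) := by
    ext x i
    fin_cases i <;> simp [hL₂, Matrix.single_mulVec_eq]
  have hL₁L₂ : L₁ ∘L L₂ = Matrix.toEuclideanCLM (𝕜 := ℂ) (Matrix.single 0 2 1) := by
    rw [hL₁_single, hL₂_single, ← mul_def, ← map_mul, Matrix.single_mul_single_same, one_mul]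
  rw [hL₁L₂, hL₁_single, hL₂_single, hA_diag]
  simp only [toEuclideanCLM_single_mem_calA_diagonal_iff (norm_nonneg l), Complex.norm_real,
    Real.norm_eq_abs, Matrix.cons_val, abs_of_pos, hα, hβ, hγ, not_le]
  exact ⟨hα_eq.le, hβ_eq.le, hβ_eq.symm.trans_lt hαβ⟩
end

section
/- Let N be a normal bounded operator on a complex Hilbert space E and T a pure quasinormal bounded operator on a complex Hilbert space H, such that the direct sum R = N⊕T on the Hilbert space direct sum E⊕H is injective, and let λ ∈ ℂ. Then a bounded operator X on E⊕H satisfies R∘X = λ·(X∘R) if and only if its block matrix has the form [[X₁,X₂],[0,X₄]] where X₁ : E → E, X₂ : H → E and X₄ : H → H satisfy N∘X₁ = λ·(X₁∘N), T∘X₄ = λ·(X₄∘T) and N∘X₂ = λ·(X₂∘T). -/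
open ContinuousLinearMap

/-!
The block `X₃ : E → H` of an extended eigenvector of `N ⊕ T` satisfies `T X₃ = X₃ (l N)`, and this
forces `X₃ = 0` as soon as `T` is pure and subnormal. Indeed, if `M` is a normal extension of `T`,
then `M X₃ = X₃ (l N)`, so `M* X₃ = X₃ (l N)*` by Fuglede–Putnam, and compressing to `H` yields
`T* X₃ = X₃ (l N)*`. Hence the closed range of `X₃` reduces `T` to a normal operator, and is zero by
purity.

A quasinormal `T` is subnormal: it satisfies `(T*T - TT*) T = 0` and `T*T ≥ TT*`, so that, with
`D = (T*T - TT*)^(1/2)`, the operator `[[T, D], [0, T*]]` is a normal extension of it.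
-/

section CStarAlgebra

variable {A : Type*} [NonUnitalCStarAlgebra A] [PartialOrder A] [StarOrderedRing A]

theorem mul_star_self_le_star_mul_self_of_commute {a : A} (h : Commute a (star a * a)) :
    a * star a ≤ star a * a := by
  have left_mul : star a * a * (a * star a) = a * star a * (a * star a) := by
    simpa only [mul_assoc] using congrArg (· * star a) h.eq.symm
  have right_mul : a * star a * (star a * a) = a * star a * (a * star a) := by
    simpa only [star_mul, star_star, mul_assoc] using congrArg star left_mul
  have sq_sub_sq : star a * a * (star a * a) - a * star a * (a * star a) =
      star (star a * a - a * star a) * (star a * a - a * star a) := by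
    simp only [star_sub, star_mul, star_star, sub_mul, mul_sub, left_mul, right_mul]
    abel
  have sq_le_sq : a * star a * (a * star a) ≤ star a * a * (star a * a) :=
    sub_nonneg.1 (sq_sub_sq ▸ star_mul_self_nonneg _)
  calc
    a * star a = CFC.sqrt (a * star a * (a * star a)) :=
      (CFC.sqrt_mul_self _ (mul_star_self_nonneg a)).symm
    _ ≤ CFC.sqrt (star a * a * (star a * a)) := CFC.sqrt_le_sqrt _ _ sq_le_sq
    _ = star a * a := CFC.sqrt_mul_self _ (star_mul_self_nonneg a)

theorem sqrt_mul_eq_zero_of_mul_eq_zero {c a : A} (hc : 0 ≤ c) (h : c * a = 0) :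
    CFC.sqrt c * a = 0 := by
  rw [← CStarRing.star_mul_self_eq_zero_iff, star_mul, (CFC.sqrt_nonneg c).isSelfAdjoint.star_eq,
    mul_assoc, ← mul_assoc (CFC.sqrt c), CFC.sqrt_mul_sqrt_self c hc, h, mul_zero]

end CStarAlgebra

section BlockOperator

variable {𝕜 E F E₁ F₁ E₂ F₂ : Type*} [NormedField 𝕜]
  [SeminormedAddCommGroup E] [NormedSpace 𝕜 E] [SeminormedAddCommGroup F] [NormedSpace 𝕜 F]
  [SeminormedAddCommGroup E₁] [NormedSpace 𝕜 E₁] [SeminormedAddCommGroup F₁] [NormedSpace 𝕜 F₁]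
  [SeminormedAddCommGroup E₂] [NormedSpace 𝕜 E₂] [SeminormedAddCommGroup F₂] [NormedSpace 𝕜 F₂]

/-- The operator between `ℓ²` direct sums with block matrix `[[A, B], [C, D]]`, acting on column
vectors. -/
noncomputable def blockOperator (A : E →L[𝕜] E₁) (B : F →L[𝕜] E₁) (C : E →L[𝕜] F₁)
    (D : F →L[𝕜] F₁) : WithLp 2 (E × F) →L[𝕜] WithLp 2 (E₁ × F₁) :=
  (WithLp.prodContinuousLinearEquiv 2 𝕜 E₁ F₁).symm.toContinuousLinearMap ∘L
    (A.coprod B).prod (C.coprod D) ∘L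
      (WithLp.prodContinuousLinearEquiv 2 𝕜 E F).toContinuousLinearMap

theorem blockOperator_toLp (A : E →L[𝕜] E₁) (B : F →L[𝕜] E₁) (C : E →L[𝕜] F₁) (D : F →L[𝕜] F₁)
    (x : E) (y : F) :
    blockOperator A B C D (WithLp.toLp 2 (x, y)) = WithLp.toLp 2 (A x + B y, C x + D y) :=
  rfl

theorem eq_blockOperator_iff {X : WithLp 2 (E × F) →L[𝕜] WithLp 2 (E₁ × F₁)}
    {A : E →L[𝕜] E₁} {B : F →L[𝕜] E₁} {C : E →L[𝕜] F₁} {D : F →L[𝕜] F₁} :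
    X = blockOperator A B C D ↔
      ∀ x y, X (WithLp.toLp 2 (x, y)) = WithLp.toLp 2 (A x + B y, C x + D y) :=
  ⟨fun h _ _ => h ▸ rfl, fun h => ContinuousLinearMap.ext fun z => h z.fst z.snd⟩

theorem exists_eq_blockOperator (X : WithLp 2 (E × F) →L[𝕜] WithLp 2 (E₁ × F₁)) :
    ∃ A B C D, X = blockOperator A B C D := by
  let inl : E →L[𝕜] WithLp 2 (E × F) :=
    (WithLp.prodContinuousLinearEquiv 2 𝕜 E F).symm.toContinuousLinearMap ∘L .inl 𝕜 E F
  let inr : F →L[𝕜] WithLp 2 (E × F) :=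
    (WithLp.prodContinuousLinearEquiv 2 𝕜 E F).symm.toContinuousLinearMap ∘L .inr 𝕜 E F
  refine ⟨WithLp.fstL 2 𝕜 E₁ F₁ ∘L X ∘L inl, WithLp.fstL 2 𝕜 E₁ F₁ ∘L X ∘L inr,
    WithLp.sndL 2 𝕜 E₁ F₁ ∘L X ∘L inl, WithLp.sndL 2 𝕜 E₁ F₁ ∘L X ∘L inr,
    eq_blockOperator_iff.2 fun x y => ?_⟩
  have inl_add_inr : (WithLp.toLp 2 (x, y) : WithLp 2 (E × F)) = inl x + inr y := by
    simp [inl, inr, ← WithLp.toLp_add]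
  rw [inl_add_inr, map_add]
  rfl

theorem blockOperator_inj {A A' : E →L[𝕜] E₁} {B B' : F →L[𝕜] E₁} {C C' : E →L[𝕜] F₁}
    {D D' : F →L[𝕜] F₁} :
    blockOperator A B C D = blockOperator A' B' C' D' ↔ A = A' ∧ B = B' ∧ C = C' ∧ D = D' := by
  refine ⟨fun h => ?_, by rintro ⟨rfl, rfl, rfl, rfl⟩; rfl⟩
  have entries := eq_blockOperator_iff.1 h
  simp only [blockOperator_toLp, (WithLp.toLp_injective 2).eq_iff, Prod.mk.injEq] at entries
  refine ⟨?_, ?_, ?_, ?_⟩ <;> ext v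
  · simpa using (entries v 0).1
  · simpa using (entries 0 v).1
  · simpa using (entries v 0).2
  · simpa using (entries 0 v).2

theorem blockOperator_comp (A : E₁ →L[𝕜] E₂) (B : F₁ →L[𝕜] E₂) (C : E₁ →L[𝕜] F₂)
    (D : F₁ →L[𝕜] F₂) (A' : E →L[𝕜] E₁) (B' : F →L[𝕜] E₁) (C' : E →L[𝕜] F₁) (D' : F →L[𝕜] F₁) :
    blockOperator A B C D ∘L blockOperator A' B' C' D' =
      blockOperator (A ∘L A' + B ∘L C') (A ∘L B' + B ∘L D')
        (C ∘L A' + D ∘L C') (C ∘L B' + D ∘L D') := by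
  refine eq_blockOperator_iff.2 fun x y => ?_
  simp only [comp_apply, blockOperator_toLp, map_add, add_apply, add_add_add_comm]

theorem smul_blockOperator (c : 𝕜) (A : E →L[𝕜] E₁) (B : F →L[𝕜] E₁) (C : E →L[𝕜] F₁)
    (D : F →L[𝕜] F₁) :
    c • blockOperator A B C D = blockOperator (c • A) (c • B) (c • C) (c • D) := by
  refine eq_blockOperator_iff.2 fun x y => ?_
  simp only [smul_apply, blockOperator_toLp, ← WithLp.toLp_smul, Prod.smul_mk, smul_add]

theorem blockOperator_diagonal_comp_eq_smul_comp_iff (N : E →L[𝕜] E) (T : F →L[𝕜] F) (l : 𝕜)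
    (X₁ : E →L[𝕜] E) (X₂ : F →L[𝕜] E) (X₃ : E →L[𝕜] F) (X₄ : F →L[𝕜] F) :
    blockOperator N 0 0 T ∘L blockOperator X₁ X₂ X₃ X₄ =
        l • (blockOperator X₁ X₂ X₃ X₄ ∘L blockOperator N 0 0 T) ↔
      N ∘L X₁ = l • (X₁ ∘L N) ∧ N ∘L X₂ = l • (X₂ ∘L T) ∧
        T ∘L X₃ = l • (X₃ ∘L N) ∧ T ∘L X₄ = l • (X₄ ∘L T) := by
  simp only [blockOperator_comp, smul_blockOperator, blockOperator_inj, zero_comp, comp_zero,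
    add_zero, zero_add]

end BlockOperator

theorem adjoint_blockOperator {𝕜 E F E₁ F₁ : Type*} [RCLike 𝕜]
    [NormedAddCommGroup E] [InnerProductSpace 𝕜 E] [CompleteSpace E]
    [NormedAddCommGroup F] [InnerProductSpace 𝕜 F] [CompleteSpace F]
    [NormedAddCommGroup E₁] [InnerProductSpace 𝕜 E₁] [CompleteSpace E₁]
    [NormedAddCommGroup F₁] [InnerProductSpace 𝕜 F₁] [CompleteSpace F₁]
    (A : E →L[𝕜] E₁) (B : F →L[𝕜] E₁) (C : E →L[𝕜] F₁) (D : F →L[𝕜] F₁) :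
    adjoint (blockOperator A B C D) =
      blockOperator (adjoint A) (adjoint C) (adjoint B) (adjoint D) := by
  refine ((eq_adjoint_iff _ _).2 ?_).symm
  rintro ⟨x₁, x₂⟩ ⟨y₁, y₂⟩
  simp only [blockOperator_toLp, WithLp.prod_inner_apply, inner_add_left, inner_add_right,
    adjoint_inner_left, add_add_add_comm]

section HilbertSpace

variable {E F H : Type*} [NormedAddCommGroup E] [InnerProductSpace ℂ E] [CompleteSpace E]
  [NormedAddCommGroup F] [InnerProductSpace ℂ F] [CompleteSpace F]
  [NormedAddCommGroup H] [InnerProductSpace ℂ H] [CompleteSpace H]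

/- Berberian's trick: `Y` intertwines `A` and `B` iff the corner operator `[[0, 0], [Y, 0]]`
commutes with `A ⊕ B`, which reduces the claim to Fuglede's theorem in a single C⋆-algebra. -/
theorem adjoint_comp_eq_comp_adjoint_of_isStarNormal {A : E →L[ℂ] E} {B : F →L[ℂ] F}
    (hA : IsStarNormal A) (hB : IsStarNormal B) {Y : E →L[ℂ] F} (h : B ∘L Y = Y ∘L A) :
    adjoint B ∘L Y = Y ∘L adjoint A := by
  have hA' : adjoint A ∘L A = A ∘L adjoint A := hA.star_comm_self
  have hB' : adjoint B ∘L B = B ∘L adjoint B := hB.star_comm_self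
  have normal_sum : IsStarNormal (blockOperator A 0 0 B) := by
    refine ⟨show adjoint _ ∘L _ = _ ∘L adjoint _ from ?_⟩
    simp [adjoint_blockOperator, blockOperator_comp, hA', hB']
  have corner_commute : Commute (blockOperator 0 0 Y 0) (blockOperator A 0 0 B) := by
    refine show _ ∘L _ = _ ∘L _ from ?_
    simp [blockOperator_comp, h]
  have corner_commute_adjoint : blockOperator 0 0 Y 0 ∘L adjoint (blockOperator A 0 0 B) =
      adjoint (blockOperator A 0 0 B) ∘L blockOperator 0 0 Y 0 :=
    normal_sum.commute_star_right corner_commute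
  simp only [adjoint_blockOperator, blockOperator_comp, blockOperator_inj] at corner_commute_adjoint
  simpa using corner_commute_adjoint.2.2.1.symm

theorem IsSubnormal.adjoint_comp_eq_comp_adjoint {T : H →L[ℂ] H} (hT : IsSubnormal T)
    {N : E →L[ℂ] E} (hN : IsStarNormal N) {Y : E →L[ℂ] H} (h : T ∘L Y = Y ∘L N) :
    adjoint T ∘L Y = Y ∘L adjoint N := by
  obtain ⟨K, _, _, _, j, M, hM, hMj⟩ := hT
  let J : H →L[ℂ] K := j.toContinuousLinearMap
  have extends_T : M ∘L J = J ∘L T := ContinuousLinearMap.ext hMj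
  have adjoint_extends_T : adjoint J ∘L adjoint M = adjoint T ∘L adjoint J := by
    simpa only [adjoint_comp] using congrArg adjoint extends_T
  have isometry : adjoint J ∘L J = .id ℂ H := j.adjoint_comp_self
  have intertwines : M ∘L (J ∘L Y) = (J ∘L Y) ∘L N := by
    rw [← comp_assoc, extends_T, comp_assoc, h, comp_assoc]
  have adjoint_intertwines := adjoint_comp_eq_comp_adjoint_of_isStarNormal hN ⟨hM⟩ intertwines
  calc
    adjoint T ∘L Y = (adjoint T ∘L adjoint J) ∘L (J ∘L Y) := by
      rw [comp_assoc, ← comp_assoc _ J, isometry, id_comp]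
    _ = adjoint J ∘L (J ∘L Y) ∘L adjoint N := by
      rw [← adjoint_extends_T, comp_assoc, adjoint_intertwines]
    _ = Y ∘L adjoint N := by
      rw [← comp_assoc, ← comp_assoc, isometry, id_comp]

theorem IsPure.eq_zero_of_comp_eq_comp {T : H →L[ℂ] H} (hT : IsPure T) {N : E →L[ℂ] E}
    (hN : IsStarNormal N) {Y : E →L[ℂ] H} (h : T ∘L Y = Y ∘L N)
    (h_adjoint : adjoint T ∘L Y = Y ∘L adjoint N) : Y = 0 := by
  have apply_Y (e : E) : T (Y e) = Y (N e) := DFunLike.congr_fun h e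
  have adjoint_apply_Y (e : E) : adjoint T (Y e) = Y (adjoint N e) :=
    DFunLike.congr_fun h_adjoint e
  have adjoint_apply_N (e : E) : adjoint N (N e) = N (adjoint N e) :=
    DFunLike.congr_fun hN.star_comm_self.eq e
  have closure_range_eq_bot : Y.range.topologicalClosure = ⊥ := by
    refine hT _ Y.range.isClosed_topologicalClosure (fun x hx => ?_) (fun x hx => ?_) ?_
    · refine map_mem_closure T.continuous hx ?_
      rintro _ ⟨e, rfl⟩
      exact ⟨N e, (apply_Y e).symm⟩
    · refine map_mem_closure (adjoint T).continuous hx ?_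
      rintro _ ⟨e, rfl⟩
      exact ⟨adjoint N e, (adjoint_apply_Y e).symm⟩
    · refine Set.EqOn.closure (f := fun x => T (adjoint T x)) (g := fun x => adjoint T (T x)) ?_
        (by fun_prop) (by fun_prop)
      rintro _ ⟨e, rfl⟩
      simp [apply_Y, adjoint_apply_Y, adjoint_apply_N]
  ext e
  exact (Submodule.eq_bot_iff _).1 closure_range_eq_bot _ (subset_closure ⟨e, rfl⟩)

theorem IsQuasinormal.commute_adjoint_comp_self {T : H →L[ℂ] H} (hT : IsQuasinormal T) :
    Commute T (adjoint T ∘L T) := by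
  have sq_modulus : modulus T * modulus T = adjoint T ∘L T :=
    CFC.sqrt_mul_sqrt_self _ (star_mul_self_nonneg T)
  have commute_modulus : Commute T (modulus T) := hT
  exact sq_modulus ▸ commute_modulus.mul_right commute_modulus

theorem isStarNormal_blockOperator_adjoint {T D : H →L[ℂ] H} (hD : IsSelfAdjoint D)
    (hDD : D ∘L D = adjoint T ∘L T - T ∘L adjoint T) (hDT : D ∘L T = 0) :
    IsStarNormal (blockOperator T D 0 (adjoint T)) := by
  have hTD : adjoint T ∘L D = 0 := by
    simpa [adjoint_comp, hD.adjoint_eq] using congrArg adjoint hDT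
  refine ⟨show adjoint _ ∘L _ = _ ∘L adjoint _ from ?_⟩
  simp [adjoint_blockOperator, blockOperator_comp, hD.adjoint_eq, hDD, hDT, hTD]

end HilbertSpace

theorem IsQuasinormal.isSubnormal {H : Type u} [NormedAddCommGroup H] [InnerProductSpace ℂ H]
    [CompleteSpace H] {T : H →L[ℂ] H} (hT : IsQuasinormal T) : IsSubnormal.{u, u} T := by
  have hC : 0 ≤ adjoint T ∘L T - T ∘L adjoint T :=
    sub_nonneg.2 (mul_star_self_le_star_mul_self_of_commute hT.commute_adjoint_comp_self)
  have hCT : (adjoint T ∘L T - T ∘L adjoint T) * T = 0 :=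
    (sub_mul _ _ _).trans (sub_eq_zero.2 hT.commute_adjoint_comp_self.eq.symm)
  have normal_extension := isStarNormal_blockOperator_adjoint
    (CFC.sqrt_nonneg (adjoint T ∘L T - T ∘L adjoint T)).isSelfAdjoint
    (CFC.sqrt_mul_sqrt_self _ hC) (sqrt_mul_eq_zero_of_mul_eq_zero hC hCT)
  let inl : H →ₗᵢ[ℂ] WithLp 2 (H × H) :=
    { toLinearMap := (WithLp.linearEquiv 2 ℂ (H × H)).symm.toLinearMap ∘ₗ .inl ℂ H H
      norm_map' := WithLp.norm_toLp_fst 2 H H }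
  refine ⟨WithLp 2 (H × H), inferInstance, inferInstance, inferInstance, inl, _,
    normal_extension.star_comm_self, fun x => ?_⟩
  change blockOperator T _ 0 (adjoint T) (WithLp.toLp 2 (x, 0)) = WithLp.toLp 2 (T x, 0)
  simp [blockOperator_toLp]

theorem extended_eigenvector_quasinormal_block_iff_general
    {E H : Type*} [NormedAddCommGroup E] [InnerProductSpace ℂ E] [CompleteSpace E]
    [NormedAddCommGroup H] [InnerProductSpace ℂ H] [CompleteSpace H]
    (N : E →L[ℂ] E) (hN : adjoint N ∘L N = N ∘L adjoint N)
    (T : H →L[ℂ] H) (hT : IsSubnormal T) (hTpure : IsPure T)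
    (R : WithLp 2 (E × H) →L[ℂ] WithLp 2 (E × H))
    (hR : ∀ (x : E) (y : H),
      R ((WithLp.equiv 2 (E × H)).symm (x, y)) = (WithLp.equiv 2 (E × H)).symm (N x, T y))
    (l : ℂ) (X : WithLp 2 (E × H) →L[ℂ] WithLp 2 (E × H)) :
    R ∘L X = l • (X ∘L R) ↔
      ∃ (X₁ : E →L[ℂ] E) (X₂ : H →L[ℂ] E) (X₄ : H →L[ℂ] H),
        N ∘L X₁ = l • (X₁ ∘L N) ∧ T ∘L X₄ = l • (X₄ ∘L T) ∧
        N ∘L X₂ = l • (X₂ ∘L T) ∧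
        ∀ (x : E) (y : H),
          X ((WithLp.equiv 2 (E × H)).symm (x, y)) =
            (WithLp.equiv 2 (E × H)).symm (X₁ x + X₂ y, X₄ y) := by
  obtain rfl : R = blockOperator N 0 0 T :=
    eq_blockOperator_iff.2 fun x y => by simpa using hR x y
  have hlN : IsStarNormal (l • N) := (show IsStarNormal N from ⟨hN⟩).smul l
  obtain ⟨X₁, X₂, X₃, X₄, rfl⟩ := exists_eq_blockOperator X
  rw [blockOperator_diagonal_comp_eq_smul_comp_iff]
  constructor
  · rintro ⟨h₁, h₂, h₃, h₄⟩
    have hX₃ : T ∘L X₃ = X₃ ∘L (l • N) := by rw [h₃, comp_smul]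
    obtain rfl : X₃ = 0 :=
      hTpure.eq_zero_of_comp_eq_comp hlN hX₃ (hT.adjoint_comp_eq_comp_adjoint hlN hX₃)
    exact ⟨X₁, X₂, X₄, h₁, h₄, h₂, fun x y => by simp [blockOperator_toLp]⟩
  · rintro ⟨X₁', X₂', X₄', h₁, h₄, h₂, hX⟩
    obtain ⟨rfl, rfl, rfl, rfl⟩ := blockOperator_inj.1
      ((eq_blockOperator_iff (C := 0)).2 fun x y => by simpa using hX x y)
    exact ⟨h₁, h₂, by simp, h₄⟩

theorem extended_eigenvector_quasinormal_block_iff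
    {E H : Type*} [NormedAddCommGroup E] [InnerProductSpace ℂ E] [CompleteSpace E] [NormedAddCommGroup H] [InnerProductSpace ℂ H] [CompleteSpace H]
    (N : E →L[ℂ] E) (hN : adjoint N ∘L N = N ∘L adjoint N)
    (T : H →L[ℂ] H) (hTqn : IsQuasinormal T) (hTpure : IsPure T)
    (R : WithLp 2 (E × H) →L[ℂ] WithLp 2 (E × H))
    (hR : ∀ (x : E) (y : H),
      R ((WithLp.equiv 2 (E × H)).symm (x, y)) = (WithLp.equiv 2 (E × H)).symm (N x, T y))
    (hRinj : Function.Injective R)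
    (l : ℂ) (X : WithLp 2 (E × H) →L[ℂ] WithLp 2 (E × H)) :
    R ∘L X = l • (X ∘L R) ↔
      ∃ (X₁ : E →L[ℂ] E) (X₂ : H →L[ℂ] E) (X₄ : H →L[ℂ] H),
        N ∘L X₁ = l • (X₁ ∘L N) ∧ T ∘L X₄ = l • (X₄ ∘L T) ∧
        N ∘L X₂ = l • (X₂ ∘L T) ∧
        ∀ (x : E) (y : H),
          X ((WithLp.equiv 2 (E × H)).symm (x, y)) = (WithLp.equiv 2 (E × H)).symm (X₁ x + X₂ y, X₄ y) :=
  extended_eigenvector_quasinormal_block_iff_general N hN T hTqn.isSubnormal hTpure R hR l X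
end

section
/- Let N be a normal bounded operator on a nonzero complex Hilbert space E and T a pure quasinormal bounded operator on a nonzero complex Hilbert space H, such that R = N⊕T on E⊕H is injective. Suppose NONE of the following holds: (a) m_{|N|} < m_{|T|}, m_{|N|} is an eigenvalue of |N| and ‖T‖ is an eigenvalue of |T|; (b) m_{|N|} = m_{|T|} and either (m_{|N|} is an eigenvalue of |N| and ‖T‖ is an eigenvalue of |T|) or (m_{|T|} is an eigenvalue of |T| and ‖T‖ is an eigenvalue of |T|); (c) m_{|N|} > m_{|T|}, m_{|T|} is an eigenvalue of |T| and ‖T‖ is an eigenvalue of |T|. Then σ_ext(N⊕T) = σ_ext(N) ∪ {λ ∈ ℂ : |λ| > min(m_{|N|}, m_{|T|})/‖T‖}. -/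
open ContinuousLinearMap

/-!
Writing an operator on `E ⊕ H` as a block matrix, `σ_ext(N ⊕ T)` is the union of the sets
`Λ(A, B) = {λ | A X = λ X B for some X ≠ 0}` over `A, B ∈ {N, T}`, and `Λ(N, N) = σ_ext(N)`.

* `Λ(T, N) = ∅`: by purity the vectors `Tⁿ w` with `T* w = 0` span a dense subspace, and
  `X* T* = conj λ N* X*` with `N*` injective forces `X*` to vanish on each of them.
* `λ ∈ Λ(A, T)` forces `m_{|A|} ≤ |λ| ‖T‖`. In the case of equality `‖Aⁿ X x‖ / m_{|A|}ⁿ` and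
  `‖Tⁿ x‖ / ‖T‖ⁿ` are monotone with nonzero limits, and such limits produce eigenvectors of the
  moduli for the eigenvalues `m_{|A|}` and `‖T‖`.
* If `m_{|A|} < |λ| ‖T‖`, spectral cutoffs of the moduli give `y ≠ 0` with `‖Aⁿ y‖ ≲ aⁿ` and a
  backward orbit `T* vₙ₊₁ = vₙ`, `T* v₀ = 0` with `‖vₙ‖ ≲ b⁻ⁿ`, where `a < |λ| b`. Then
  `X h = ∑ λ⁻ⁿ ⟪vₙ, h⟫ Aⁿ y` converges and satisfies `A X = λ X T`.
-/

section Operators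

open Filter Topology
open scoped InnerProductSpace

variable {G H : Type*} [NormedAddCommGroup G] [InnerProductSpace ℂ G]
  [NormedAddCommGroup H] [InnerProductSpace ℂ H]

lemma mval_mul_norm_sq_le (P : H →L[ℂ] H) (x : H) :
    mval P * ‖x‖ ^ 2 ≤ P.reApplyInnerSelf x := by
  rcases eq_or_ne x 0 with rfl | hx
  · simp [reApplyInnerSelf_apply]
  have hbdd : BddBelow {r : ℝ | ∃ u : H, ‖u‖ = 1 ∧ r = P.reApplyInnerSelf u} := by
    refine ⟨-‖P‖, ?_⟩
    rintro _ ⟨u, hu, rfl⟩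
    refine neg_le_of_abs_le ((RCLike.abs_re_le_norm _).trans ((norm_inner_le_norm _ _).trans ?_))
    simpa [hu] using P.le_opNorm u
  have hunit : ‖((‖x‖ : ℂ)⁻¹) • x‖ = 1 := norm_smul_inv_norm hx
  have hle : mval P ≤ P.reApplyInnerSelf (((‖x‖ : ℂ)⁻¹) • x) := csInf_le hbdd ⟨_, hunit, rfl⟩
  rw [reApplyInnerSelf_smul, norm_inv, Complex.norm_real, norm_norm, inv_pow, mul_comm,
    ← div_eq_mul_inv] at hle
  rwa [le_div_iff₀ (by positivity)] at hle

lemma mval_mul_norm_le (P : H →L[ℂ] H) (x : H) : mval P * ‖x‖ ≤ ‖P x‖ := by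
  rcases eq_or_ne x 0 with rfl | hx
  · simp
  refine le_of_mul_le_mul_right ?_ (norm_pos_iff.2 hx)
  calc mval P * ‖x‖ * ‖x‖ = mval P * ‖x‖ ^ 2 := by ring
    _ ≤ P.reApplyInnerSelf x := mval_mul_norm_sq_le P x
    _ ≤ ‖P x‖ * ‖x‖ := re_inner_le_norm _ _

lemma le_mval [Nontrivial H] {P : H →L[ℂ] H} {a : ℝ}
    (h : ∀ x, a * ‖x‖ ^ 2 ≤ P.reApplyInnerSelf x) : a ≤ mval P := by
  obtain ⟨u, hu⟩ := exists_norm_eq H zero_le_one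
  refine le_csInf ⟨_, u, hu, rfl⟩ ?_
  rintro _ ⟨x, hx, rfl⟩
  simpa [hx] using h x

lemma mval_nonneg {P : H →L[ℂ] H} (hP : P.IsPositive) : 0 ≤ mval P := by
  apply Real.sInf_nonneg
  rintro _ ⟨x, -, rfl⟩
  exact hP.re_inner_nonneg_left x

lemma pow_mul_norm_le_norm_pow_apply {R : H →L[ℂ] H} {m : ℝ} (hm : 0 ≤ m)
    (h : ∀ x, m * ‖x‖ ≤ ‖R x‖) (n : ℕ) (x : H) : m ^ n * ‖x‖ ≤ ‖(R ^ n) x‖ := by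
  induction n with
  | zero => simp
  | succ n ih =>
    calc m ^ (n + 1) * ‖x‖ = m * (m ^ n * ‖x‖) := by ring
      _ ≤ m * ‖(R ^ n) x‖ := by gcongr
      _ ≤ ‖R ((R ^ n) x)‖ := h _
      _ = ‖(R ^ (n + 1)) x‖ := by rw [pow_succ', mul_apply_eq_comp]

lemma norm_pow_apply_le (T : H →L[ℂ] H) (n : ℕ) (x : H) : ‖(T ^ n) x‖ ≤ ‖T‖ ^ n * ‖x‖ := by
  cases subsingleton_or_nontrivial H
  · simp [Subsingleton.elim x 0]
  · exact (T ^ n).le_of_opNorm_le (norm_pow_le T n) x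

lemma pow_mul_pow_add_mul_eq {M : Type*} [Monoid M] {p g f : M} (hpg : Commute p g)
    (hf : p * g * f = f) (j k : ℕ) : p ^ k * (g ^ (j + k) * f) = g ^ j * f := by
  induction k with
  | zero => rw [pow_zero, one_mul, add_zero]
  | succ k ih =>
    calc p ^ (k + 1) * (g ^ (j + (k + 1)) * f) = p ^ k * ((p * g ^ (j + k)) * g * f) := by
          rw [← add_assoc, pow_succ, pow_succ]; simp only [mul_assoc]
      _ = p ^ k * (g ^ (j + k) * (p * g * f)) := by
          rw [(hpg.pow_right (j + k)).eq]; simp only [mul_assoc]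
      _ = g ^ j * f := by rw [hf, ih]

lemma apply_comp_eq {R : G →L[ℂ] G} {T : H →L[ℂ] H} {X : H →L[ℂ] G} {l : ℂ}
    (hX : R ∘L X = l • (X ∘L T)) (x : H) : R (X x) = l • X (T x) :=
  DFunLike.congr_fun hX x

lemma pow_apply_comp_eq {R : G →L[ℂ] G} {T : H →L[ℂ] H} {X : H →L[ℂ] G} {l : ℂ}
    (hX : R ∘L X = l • (X ∘L T)) (n : ℕ) (x : H) : (R ^ n) (X x) = l ^ n • X ((T ^ n) x) := by
  induction n with
  | zero => simp only [pow_zero, one_apply_eq_self, one_smul]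
  | succ n ih =>
    rw [pow_succ', mul_apply_eq_comp, ih, map_smul, apply_comp_eq hX, smul_smul, ← pow_succ,
      ← mul_apply_eq_comp T, ← pow_succ']

lemma norm_mul_norm_pos_of_mem_intertwiningValues {R : G →L[ℂ] G} {T : H →L[ℂ] H} {l : ℂ}
    (hR : Function.Injective R) (hl : l ∈ intertwiningValues R T) : 0 < ‖l‖ * ‖T‖ := by
  obtain ⟨X, hX0, hX⟩ := hl
  suffices l ≠ 0 ∧ T ≠ 0 from mul_pos (norm_pos_iff.2 this.1) (norm_pos_iff.2 this.2)
  by_contra! hzero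
  refine hX0 (ContinuousLinearMap.ext fun x => hR ?_)
  rw [apply_comp_eq hX, zero_apply, map_zero]
  rcases eq_or_ne l 0 with rfl | hl0
  · rw [zero_smul]
  · rw [hzero hl0, zero_apply, map_zero, smul_zero]

lemma comp_eq_smul_comp_of_hasSum {R : G →L[ℂ] G} {T : H →L[ℂ] H} {l : ℂ} {f : ℕ → H →L[ℂ] G}
    {X : H →L[ℂ] G} (hf : HasSum f X) (hzero : f 0 ∘L T = 0)
    (hsucc : ∀ n, R ∘L f n = l • (f (n + 1) ∘L T)) : R ∘L X = l • (X ∘L T) := by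
  have hleft : HasSum (fun n => R ∘L f n) (R ∘L X) := (compL ℂ H G G R).hasSum hf
  have hright : HasSum (fun n => f n ∘L T) (X ∘L T) := ((compL ℂ H H G).flip T).hasSum hf
  have htail : HasSum (fun n => f (n + 1) ∘L T) (X ∘L T) := by
    simpa only [Finset.sum_range_one, hzero, sub_zero] using (hasSum_nat_add_iff' 1).2 hright
  refine hleft.unique ?_
  simp only [hsucc]
  exact htail.const_smul l

lemma summable_smul_rankOne [CompleteSpace G] {y : ℕ → G} {v : ℕ → H} {l : ℂ} {a b C D : ℝ}
    (ha : 0 ≤ a) (hab : a < ‖l‖ * b) (hy : ∀ n, ‖y n‖ ≤ C * a ^ n)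
    (hv : ∀ n, ‖v n‖ ≤ D * b⁻¹ ^ n) :
    Summable fun n : ℕ => l⁻¹ ^ n • InnerProductSpace.rankOne ℂ (y n) (v n) := by
  have hlb : 0 < ‖l‖ * b := ha.trans_lt hab
  have hgeom : Summable fun n : ℕ => C * D * (a / (‖l‖ * b)) ^ n :=
    (summable_geometric_of_lt_one (div_nonneg ha hlb.le) ((div_lt_one hlb).2 hab)).mul_left _
  refine hgeom.of_norm_bounded fun n => ?_
  calc ‖l⁻¹ ^ n • InnerProductSpace.rankOne ℂ (y n) (v n)‖
      = ‖l‖⁻¹ ^ n * (‖y n‖ * ‖v n‖) := by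
        rw [norm_smul, norm_pow, norm_inv, InnerProductSpace.norm_rankOne]
    _ ≤ ‖l‖⁻¹ ^ n * ((C * a ^ n) * (D * b⁻¹ ^ n)) := by
        gcongr
        exacts [(norm_nonneg _).trans (hy n), hy n, hv n]
    _ = C * D * (a / (‖l‖ * b)) ^ n := by
        rw [div_eq_mul_inv, mul_inv, mul_pow, mul_pow]
        ring

section Complete

variable [CompleteSpace H]

lemma norm_pow_apply_sub_pow_apply_sq {B : H →L[ℂ] H} (hB : IsSelfAdjoint B) (n m : ℕ) (x : H) :
    ‖(B ^ (2 * n)) x - (B ^ (2 * m)) x‖ ^ 2 =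
      ‖(B ^ (2 * n)) x‖ ^ 2 - 2 * ‖(B ^ (n + m)) x‖ ^ 2 + ‖(B ^ (2 * m)) x‖ ^ 2 := by
  have hsymm (k : ℕ) (u v : H) : ⟪(B ^ k) u, v⟫_ℂ = ⟪u, (B ^ k) v⟫_ℂ := (hB.pow k).isSymmetric u v
  have hinner : ⟪(B ^ (2 * n)) x, (B ^ (2 * m)) x⟫_ℂ = ⟪(B ^ (n + m)) x, (B ^ (n + m)) x⟫_ℂ := by
    rw [hsymm, hsymm, ← mul_apply_eq_comp, ← mul_apply_eq_comp, ← pow_add, ← pow_add]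
    congr 3
    ring
  rw [norm_sub_sq (𝕜 := ℂ), hinner, inner_self_eq_norm_sq]

lemma exists_fixedVector_of_tendsto_norm_pow_apply {B : H →L[ℂ] H} (hB : B.IsPositive) {x : H}
    {c : ℝ} (hc : c ≠ 0) (hlim : Tendsto (fun n : ℕ => ‖(B ^ n) x‖) atTop (𝓝 c)) :
    ∃ z : H, z ≠ 0 ∧ B z = z := by
  have hdouble : Tendsto (fun n : ℕ => 2 * n) atTop atTop :=
    tendsto_id.const_mul_atTop' (by norm_num)
  have hcauchy : CauchySeq fun n : ℕ => (B ^ (2 * n)) x := by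
    have hsq := hlim.pow 2
    have hn : Tendsto Prod.fst (atTop ×ˢ atTop : Filter (ℕ × ℕ)) atTop := tendsto_fst
    have hm : Tendsto Prod.snd (atTop ×ˢ atTop : Filter (ℕ × ℕ)) atTop := tendsto_snd
    have hfst := hsq.comp (hdouble.comp hn)
    have hsnd := hsq.comp (hdouble.comp hm)
    have hadd := hsq.comp
      (tendsto_atTop_mono (fun p : ℕ × ℕ => Nat.le_add_right p.1 p.2) hn)
    have hdist := ((hfst.sub (hadd.const_mul 2)).add hsnd).sqrt
    rw [cauchySeq_iff_tendsto_dist_atTop_0, ← prod_atTop_atTop_eq]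
    convert hdist using 2 with p
    · rw [dist_eq_norm, ← Real.sqrt_sq (norm_nonneg _)]
      exact congrArg Real.sqrt (norm_pow_apply_sub_pow_apply_sq hB.isSelfAdjoint p.1 p.2 x)
    · rw [show c ^ 2 - 2 * c ^ 2 + c ^ 2 = 0 by ring, Real.sqrt_zero]
  obtain ⟨z, hz⟩ := cauchySeq_tendsto_of_complete hcauchy
  have hBBz : B (B z) = z := by
    refine tendsto_nhds_unique ((B.continuous.tendsto _).comp ((B.continuous.tendsto z).comp hz))
      ((hz.comp (tendsto_add_atTop_nat 1)).congr fun n => ?_)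
    simp only [Function.comp_apply, mul_add, mul_one, add_comm _ 2, pow_add, pow_two,
      mul_apply_eq_comp]
  have hz0 : z ≠ 0 := by
    rintro rfl
    have hnorm := hz.norm
    rw [norm_zero] at hnorm
    exact hc (tendsto_nhds_unique (hlim.comp hdouble) hnorm)
  refine ⟨B z + z, fun h0 => hz0 ?_, by rw [map_add, hBBz, add_comm]⟩
  have hneg : B z = -z := eq_neg_of_add_eq_zero_left h0
  have hpos := hB.re_inner_nonneg_left z
  rw [hneg, inner_neg_left, map_neg, inner_self_eq_norm_sq] at hpos
  exact norm_eq_zero.1 (by nlinarith [norm_nonneg z])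

lemma exists_eigenvector_of_tendsto_norm_pow_apply {P : H →L[ℂ] H} (hP : P.IsPositive) {s : ℝ}
    (hs : 0 < s) {x : H} {c : ℝ} (hc : c ≠ 0)
    (hlim : Tendsto (fun n : ℕ => ‖(P ^ n) x‖ / s ^ n) atTop (𝓝 c)) :
    ∃ z : H, z ≠ 0 ∧ P z = (s : ℂ) • z := by
  have hsC : (s : ℂ) ≠ 0 := Complex.ofReal_ne_zero.2 hs.ne'
  have hB : ((s : ℂ)⁻¹ • P).IsPositive :=
    hP.smul_of_nonneg (by rw [← Complex.ofReal_inv]; exact_mod_cast (inv_pos.2 hs).le)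
  obtain ⟨z, hz0, hz⟩ := exists_fixedVector_of_tendsto_norm_pow_apply hB hc (hlim.congr fun n => by
    rw [smul_pow, smul_apply, norm_smul, norm_pow, norm_inv, Complex.norm_real,
      Real.norm_of_nonneg hs.le, inv_pow, inv_mul_eq_div])
  exact ⟨z, hz0, (inv_smul_eq_iff₀ hsC).1 hz⟩

lemma exists_eigenvector_norm {P : H →L[ℂ] H} (hP : P.IsPositive) (hP0 : 0 < ‖P‖) {x : H} {c : ℝ}
    (hc : 0 < c) (h : ∀ n : ℕ, c * ‖P‖ ^ n ≤ ‖(P ^ n) x‖) :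
    ∃ z : H, z ≠ 0 ∧ P z = (‖P‖ : ℂ) • z := by
  have hanti : Antitone fun n : ℕ => ‖(P ^ n) x‖ / ‖P‖ ^ n := by
    refine antitone_nat_of_succ_le fun n => ?_
    rw [pow_succ ‖P‖, ← div_div, div_right_comm]
    gcongr
    rw [div_le_iff₀' hP0, pow_succ', mul_apply_eq_comp]
    exact P.le_opNorm _
  have hlow (n : ℕ) : c ≤ ‖(P ^ n) x‖ / ‖P‖ ^ n := (le_div_iff₀ (by positivity)).2 (h n)
  have hlim := tendsto_atTop_ciInf hanti ⟨c, Set.forall_mem_range.2 hlow⟩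
  exact exists_eigenvector_of_tendsto_norm_pow_apply hP hP0
    (hc.trans_le (ge_of_tendsto' hlim hlow)).ne' hlim

lemma exists_eigenvector_mval {P : H →L[ℂ] H} (hP : P.IsPositive) (hm : 0 < mval P) {x : H}
    (hx : x ≠ 0) {C : ℝ} (h : ∀ n : ℕ, ‖(P ^ n) x‖ ≤ C * mval P ^ n) :
    ∃ z : H, z ≠ 0 ∧ P z = (mval P : ℂ) • z := by
  have hmono : Monotone fun n : ℕ => ‖(P ^ n) x‖ / mval P ^ n := by
    refine monotone_nat_of_le_succ fun n => ?_
    rw [pow_succ (mval P), ← div_div, div_right_comm]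
    gcongr
    rw [le_div_iff₀' hm, pow_succ' P, mul_apply_eq_comp]
    exact mval_mul_norm_le P _
  have hlow (n : ℕ) : ‖x‖ ≤ ‖(P ^ n) x‖ / mval P ^ n := by simpa using hmono (Nat.zero_le n)
  have hup (n : ℕ) : ‖(P ^ n) x‖ / mval P ^ n ≤ C := (div_le_iff₀ (by positivity)).2 (h n)
  have hlim := tendsto_atTop_ciSup hmono ⟨C, Set.forall_mem_range.2 hup⟩
  exact exists_eigenvector_of_tendsto_norm_pow_apply hP hm
    ((norm_pos_iff.2 hx).trans_le (ge_of_tendsto' hlim hlow)).ne' hlim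

lemma exists_mem_spectrum_lt_of_mval_lt [Nontrivial H] {P : H →L[ℂ] H} (hP : IsSelfAdjoint P)
    {a : ℝ} (ha : mval P < a) : ∃ t ∈ spectrum ℝ P, t < a := by
  by_contra! hspec
  have hle : algebraMap ℝ (H →L[ℂ] H) a ≤ P := (algebraMap_le_iff_le_spectrum hP).2 hspec
  refine ha.not_ge (le_mval fun x => ?_)
  have hpos := ((le_def _ _).1 hle).re_inner_nonneg_left x
  rw [sub_apply, inner_sub_left, map_sub, sub_nonneg,
    ContinuousLinearMap.algebraMap_apply, ← Complex.coe_smul, inner_smul_left,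
    Complex.conj_ofReal] at hpos
  rw [reApplyInnerSelf_apply]
  refine le_of_eq_of_le ?_ hpos
  rw [← inner_self_eq_norm_sq (𝕜 := ℂ)]
  exact (Complex.re_ofReal_mul _ _).symm

lemma exists_norm_pow_apply_le_of_mval_lt [Nontrivial H] {P : H →L[ℂ] H} (hP : P.IsPositive)
    {a : ℝ} (ha : mval P < a) :
    ∃ y : H, y ≠ 0 ∧ ∃ C : ℝ, ∀ n : ℕ, ‖(P ^ n) y‖ ≤ C * a ^ n := by
  have ha0 : 0 < a := (mval_nonneg hP).trans_lt ha
  have hsa : IsSelfAdjoint P := hP.isSelfAdjoint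
  set F : H →L[ℂ] H := cfc (fun t : ℝ => max (a - t) 0) P with hF
  obtain ⟨t, ht, hta⟩ := exists_mem_spectrum_lt_of_mval_lt hsa ha
  have hF0 : F ≠ 0 := by
    have hle := norm_apply_le_norm_cfc (fun t : ℝ => max (a - t) 0) P ht (by fun_prop) hsa
    rw [← norm_pos_iff]
    exact (norm_pos_iff.2 (lt_max_of_lt_left (sub_pos.2 hta)).ne').trans_le hle
  obtain ⟨w, hw⟩ : ∃ w, F w ≠ 0 := DFunLike.ne_iff.1 hF0
  have hPF (n : ℕ) : ‖P ^ n * F‖ ≤ a ^ n * a := by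
    rw [hF, ← cfc_pow_id (R := ℝ) P n, ← cfc_mul _ _ P (by fun_prop) (by fun_prop)]
    refine norm_cfc_le (by positivity) fun t ht => ?_
    have ht0 : 0 ≤ t := spectrum_nonneg_of_nonneg ((nonneg_iff_isPositive P).2 hP) ht
    rw [Real.norm_of_nonneg (by positivity)]
    rcases le_total t a with h | h
    · gcongr
      exact max_le (by linarith) ha0.le
    · rw [max_eq_right (sub_nonpos.2 h), mul_zero]
      positivity
  refine ⟨F w, hw, a * ‖w‖, fun n => ?_⟩
  calc ‖(P ^ n) (F w)‖ ≤ ‖P ^ n * F‖ * ‖w‖ := le_opNorm (P ^ n * F) w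
    _ ≤ a ^ n * a * ‖w‖ := by gcongr; exact hPF n
    _ = a * ‖w‖ * a ^ n := by ring

-- `F` cuts off the spectrum below `b`, and `G` inverts `P` above `b`.
lemma exists_spectral_cutoff {P : H →L[ℂ] H} (hP : P.IsPositive) {b : ℝ} (hb0 : 0 < b)
    (hb : b < ‖P‖) :
    ∃ F G : H →L[ℂ] H, F ≠ 0 ∧ P * G * F = F ∧ ‖G‖ ≤ b⁻¹ ∧
      ∀ S, Commute P S → Commute F S ∧ Commute G S := by
  have hsa : IsSelfAdjoint P := hP.isSelfAdjoint
  have hmax (t : ℝ) : 0 < max t b := hb0.trans_le (le_max_right t b)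
  have hinv : Continuous fun t : ℝ => (max t b)⁻¹ :=
    Continuous.inv₀ (by fun_prop) fun t => (hmax t).ne'
  have : Nontrivial (H →L[ℂ] H) := ⟨P, 0, norm_pos_iff.1 (hb0.trans hb)⟩
  refine ⟨cfc (fun t : ℝ => max (t - b) 0) P, cfc (fun t : ℝ => (max t b)⁻¹) P, ?_, ?_, ?_,
    fun S hS => ⟨hS.cfc_real _, hS.cfc_real _⟩⟩
  · have hle := norm_apply_le_norm_cfc (fun t : ℝ => max (t - b) 0) P
      (CStarAlgebra.norm_mem_spectrum_of_nonneg ((nonneg_iff_isPositive P).2 hP))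
      (by fun_prop) hsa
    rw [← norm_pos_iff]
    exact (norm_pos_iff.2 (lt_max_of_lt_left (sub_pos.2 hb)).ne').trans_le hle
  · nth_rw 1 [← cfc_id' ℝ P]
    have hmul : Continuous fun t : ℝ => t * (max t b)⁻¹ := continuous_id.mul hinv
    rw [← cfc_mul _ _ P (by fun_prop) hinv.continuousOn,
      ← cfc_mul _ _ P hmul.continuousOn (by fun_prop)]
    refine cfc_congr fun t _ => ?_
    rcases le_total t b with h | h
    · simp [max_eq_right (sub_nonpos.2 h)]
    · simp [max_eq_left h, (hb0.trans_le h).ne']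
  · refine norm_cfc_le (by positivity) fun t _ => ?_
    rw [Real.norm_of_nonneg (inv_pos.2 (hmax t)).le]
    exact inv_anti₀ hb0 (le_max_right t b)

lemma modulus_isPositive (T : H →L[ℂ] H) : (modulus T).IsPositive :=
  (nonneg_iff_isPositive _).1 (CFC.abs_nonneg T)

lemma modulus_mul_modulus (T : H →L[ℂ] H) : modulus T * modulus T = adjoint T * T :=
  CFC.abs_mul_abs T

lemma norm_modulus (T : H →L[ℂ] H) : ‖modulus T‖ = ‖T‖ :=
  CFC.norm_abs

lemma norm_modulus_apply (T : H →L[ℂ] H) (x : H) : ‖modulus T x‖ = ‖T x‖ := by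
  rw [← sq_eq_sq₀ (norm_nonneg _) (norm_nonneg _), ← inner_self_eq_norm_sq (𝕜 := ℂ),
    ← inner_self_eq_norm_sq (𝕜 := ℂ), (modulus_isPositive T).inner_left_eq_inner_right,
    ← mul_apply_eq_comp, modulus_mul_modulus, mul_apply_eq_comp, adjoint_inner_right]

lemma mval_modulus_mul_norm_le (T : H →L[ℂ] H) (x : H) : mval (modulus T) * ‖x‖ ≤ ‖T x‖ :=
  (mval_mul_norm_le _ x).trans_eq (norm_modulus_apply T x)

lemma isQuasinormal_of_isStarNormal {N : H →L[ℂ] H} (hN : IsStarNormal N) : IsQuasinormal N :=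
  (CFC.commute_abs_self N).symm

namespace IsQuasinormal

variable {T : H →L[ℂ] H} (hT : IsQuasinormal T)

include hT

lemma commute_modulus : Commute (modulus T) T := hT.symm

lemma commute_modulus_adjoint : Commute (modulus T) (adjoint T) := by
  have := hT.commute_modulus.star_star
  rwa [(modulus_isPositive T).isSelfAdjoint.star_eq] at this

lemma commute_adjoint_mul_self_adjoint : Commute (adjoint T * T) (adjoint T) := by
  rw [← modulus_mul_modulus]
  exact hT.commute_modulus_adjoint.mul_left hT.commute_modulus_adjoint

lemma norm_modulus_pow_apply (n : ℕ) (x : H) : ‖(modulus T ^ n) x‖ = ‖(T ^ n) x‖ := by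
  induction n generalizing x with
  | zero => simp
  | succ n ih =>
    rw [pow_succ, mul_apply_eq_comp, ih, ← mul_apply_eq_comp, ← (hT.commute_modulus.pow_right n).eq,
      mul_apply_eq_comp, norm_modulus_apply, ← mul_apply_eq_comp, ← pow_succ']

lemma adjoint_pow_succ_apply (n : ℕ) (x : H) :
    adjoint T ((T ^ (n + 1)) x) = (T ^ n) (adjoint T (T x)) := by
  have hcomm : Commute (adjoint T * T) (T ^ n) := by
    rw [← modulus_mul_modulus]
    exact (hT.commute_modulus.mul_left hT.commute_modulus).pow_right n
  have hop : adjoint T * T ^ (n + 1) = T ^ n * (adjoint T * T) := by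
    rw [pow_succ', ← mul_assoc, hcomm.eq]
  exact DFunLike.congr_fun hop x

lemma adjoint_adjoint_apply_eq_zero {w : H} (hw : adjoint T w = 0) :
    adjoint T (adjoint T (T w)) = 0 := by
  have hop : adjoint T (adjoint T (T w)) = adjoint T (T (adjoint T w)) :=
    DFunLike.congr_fun hT.commute_adjoint_mul_self_adjoint.eq.symm w
  rw [hop, hw, map_zero, map_zero]

end IsQuasinormal

/-- The orthogonal complement of all `Tⁿ w` with `T* w = 0`. For quasinormal `T` this is the summand
on which `T` is normal. -/
noncomputable def normalPart (T : H →L[ℂ] H) : Submodule ℂ H :=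
  (⨆ n : ℕ, (adjoint T).ker.map (T ^ n).toLinearMap)ᗮ

lemma mem_normalPart_iff {T : H →L[ℂ] H} {x : H} :
    x ∈ normalPart T ↔ ∀ (n : ℕ) (w : H), adjoint T w = 0 → ⟪(T ^ n) w, x⟫_ℂ = 0 := by
  rw [normalPart, ← Submodule.iInf_orthogonal, Submodule.mem_iInf]
  refine ⟨fun h n w hw => h n _ ⟨w, hw, rfl⟩, fun h n => ?_⟩
  rintro _ ⟨w, hw, rfl⟩
  exact h n w hw

lemma adjoint_mem_normalPart {T : H →L[ℂ] H} {x : H} (hx : x ∈ normalPart T) :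
    adjoint T x ∈ normalPart T := by
  rw [mem_normalPart_iff] at hx ⊢
  intro n w hw
  rw [adjoint_inner_right, ← mul_apply_eq_comp, ← pow_succ']
  exact hx (n + 1) w hw

namespace IsQuasinormal

variable {T : H →L[ℂ] H} (hT : IsQuasinormal T) {x : H}

include hT

lemma apply_mem_normalPart (hx : x ∈ normalPart T) : T x ∈ normalPart T := by
  rw [mem_normalPart_iff] at hx ⊢
  intro n w hw
  rw [← adjoint_inner_left]
  cases n with
  | zero => simp [hw]
  | succ n =>
    rw [hT.adjoint_pow_succ_apply]
    exact hx n _ (hT.adjoint_adjoint_apply_eq_zero hw)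

lemma apply_adjoint_eq_of_mem_normalPart (hx : x ∈ normalPart T) :
    T (adjoint T x) = adjoint T (T x) := by
  set d : H := T (adjoint T x) - adjoint T (T x) with hd
  have hd_mem : d ∈ normalPart T :=
    sub_mem (hT.apply_mem_normalPart (adjoint_mem_normalPart hx))
      (adjoint_mem_normalPart (hT.apply_mem_normalPart hx))
  have hd_ker : adjoint T d = 0 := by
    rw [hd, map_sub, sub_eq_zero]
    exact DFunLike.congr_fun hT.commute_adjoint_mul_self_adjoint.eq x
  exact sub_eq_zero.1 (inner_self_eq_zero.1 (mem_normalPart_iff.1 hd_mem 0 d hd_ker))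

lemma normalPart_eq_bot (hp : IsPure T) : normalPart T = ⊥ :=
  hp _ (Submodule.isClosed_orthogonal _) (fun _ => hT.apply_mem_normalPart)
    (fun _ => adjoint_mem_normalPart) (fun _ => hT.apply_adjoint_eq_of_mem_normalPart)

lemma eq_zero_of_forall_apply_pow_eq_zero (hp : IsPure T) {S : H →L[ℂ] G}
    (hS : ∀ (n : ℕ) (w : H), adjoint T w = 0 → S ((T ^ n) w) = 0) : S = 0 := by
  have hle : ⨆ n : ℕ, (adjoint T).ker.map (T ^ n).toLinearMap ≤ S.ker := by
    refine iSup_le fun n => ?_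
    rintro _ ⟨w, hw, rfl⟩
    exact hS n w hw
  have hdense : (⨆ n : ℕ, (adjoint T).ker.map (T ^ n).toLinearMap).topologicalClosure = ⊤ :=
    (Submodule.topologicalClosure_eq_top_iff).2 (hT.normalPart_eq_bot hp)
  have htop := Submodule.topologicalClosure_minimal _ hle S.isClosed_ker
  ext x
  exact htop (hdense ▸ Submodule.mem_top)

lemma exists_adjoint_apply_eq_zero_apply_ne_zero (hp : IsPure T) {F : H →L[ℂ] H} (hF : F ≠ 0)
    (hFT : Commute F T) : ∃ w, adjoint T w = 0 ∧ F w ≠ 0 := by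
  by_contra! hker
  refine hF (hT.eq_zero_of_forall_apply_pow_eq_zero hp fun n w hw => ?_)
  rw [← mul_apply_eq_comp, (hFT.pow_right n).eq, mul_apply_eq_comp, hker w hw, map_zero]

end IsQuasinormal

/-- A backward orbit `⋯ ↦ v 2 ↦ v 1 ↦ v 0 ↦ 0` of `S` whose initial vector `v 0` is nonzero and
orthogonal to all the others. It is applied to `S = T*`. -/
structure IsBackwardOrbit (S : H →L[ℂ] H) (v : ℕ → H) : Prop where
  zero_ne : v 0 ≠ 0
  apply_zero : S (v 0) = 0
  apply_succ : ∀ n, S (v (n + 1)) = v n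
  inner_succ_zero : ∀ n, ⟪v (n + 1), v 0⟫_ℂ = 0

lemma IsQuasinormal.exists_isBackwardOrbit {T : H →L[ℂ] H} (hT : IsQuasinormal T) (hp : IsPure T)
    {b : ℝ} (hb0 : 0 < b) (hb : b < ‖T‖) :
    ∃ v, IsBackwardOrbit (adjoint T) v ∧ ∃ C : ℝ, ∀ n, ‖v n‖ ≤ C * b⁻¹ ^ n := by
  obtain ⟨F, G, hF0, hPGF, hGnorm, hcomm⟩ :=
    exists_spectral_cutoff (modulus_isPositive T) hb0 (by rwa [norm_modulus])
  set P := modulus T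
  obtain ⟨w, hw, hFw⟩ :=
    hT.exists_adjoint_apply_eq_zero_apply_ne_zero hp hF0 (hcomm T hT.commute_modulus).1
  have hPG : Commute P G := (hcomm P (Commute.refl P)).2.symm
  have hcancel (j k : ℕ) : (P ^ k) ((G ^ (j + k)) (F w)) = (G ^ j) (F w) :=
    DFunLike.congr_fun (pow_mul_pow_add_mul_eq hPG hPGF j k) w
  have hadjF : adjoint T (F w) = 0 := by
    have hop : adjoint T (F w) = F (adjoint T w) :=
      DFunLike.congr_fun (hcomm _ hT.commute_modulus_adjoint).1.eq.symm w
    rw [hop, hw, map_zero]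
  refine ⟨fun n => (T ^ n) ((G ^ (2 * n)) (F w)), ⟨hFw, hadjF, fun n => ?_, fun n => ?_⟩,
    ‖F w‖, fun n => ?_⟩
  · rw [hT.adjoint_pow_succ_apply, ← mul_apply_eq_comp (adjoint T), ← modulus_mul_modulus,
      ← pow_two, mul_add, hcancel]
  · change ⟪(T ^ (n + 1)) ((G ^ (2 * (n + 1))) (F w)), F w⟫_ℂ = 0
    rw [pow_succ', mul_apply_eq_comp, ← adjoint_inner_right, hadjF, inner_zero_right]
  · calc ‖(T ^ n) ((G ^ (2 * n)) (F w))‖ = ‖(P ^ n) ((G ^ (2 * n)) (F w))‖ :=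
          (hT.norm_modulus_pow_apply n _).symm
      _ = ‖(G ^ n) (F w)‖ := by rw [two_mul, hcancel]
      _ ≤ ‖G‖ ^ n * ‖F w‖ := norm_pow_apply_le G n _
      _ ≤ b⁻¹ ^ n * ‖F w‖ := by gcongr
      _ = ‖F w‖ * b⁻¹ ^ n := mul_comm _ _

lemma IsBackwardOrbit.mem_intertwiningValues {T : H →L[ℂ] H} {v : ℕ → H}
    (hv : IsBackwardOrbit (adjoint T) v) {R : G →L[ℂ] G} {y : G} (hy : y ≠ 0) {l : ℂ} (hl : l ≠ 0)
    (hsum : Summable fun n : ℕ => l⁻¹ ^ n • InnerProductSpace.rankOne ℂ ((R ^ n) y) (v n)) :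
    l ∈ intertwiningValues R T := by
  obtain ⟨X, hX⟩ := hsum
  have hXv : X (v 0) = ⟪v 0, v 0⟫_ℂ • y := by
    refine ((ContinuousLinearMap.apply ℂ G (v 0)).hasSum hX).unique ?_
    convert hasSum_single 0 fun n hn => ?_ using 1
    · simp
    · obtain ⟨n, rfl⟩ := Nat.exists_eq_succ_of_ne_zero hn
      simp [hv.inner_succ_zero n]
  refine ⟨X, ?_, comp_eq_smul_comp_of_hasSum hX ?_ fun n => ?_⟩
  · rintro rfl
    exact smul_ne_zero (inner_self_ne_zero.2 hv.zero_ne) hy hXv.symm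
  · rw [smul_comp, InnerProductSpace.rankOne_comp, hv.apply_zero, map_zero, smul_zero]
  · rw [comp_smul, InnerProductSpace.comp_rankOne, smul_comp, InnerProductSpace.rankOne_comp,
      hv.apply_succ, ← mul_apply_eq_comp, ← pow_succ', smul_smul, pow_succ' l⁻¹,
      mul_inv_cancel_left₀ hl]

lemma intertwiningValues_eq_empty {T : H →L[ℂ] H} (hT : IsQuasinormal T) (hp : IsPure T)
    (hTinj : Function.Injective T) [CompleteSpace G] {N : G →L[ℂ] G}
    (hN : Function.Injective (adjoint N)) : intertwiningValues T N = ∅ := by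
  refine Set.eq_empty_iff_forall_notMem.2 fun l hl => ?_
  have hl0 : l ≠ 0 := norm_pos_iff.1
    (pos_of_mul_pos_left (norm_mul_norm_pos_of_mem_intertwiningValues hTinj hl) (norm_nonneg N))
  obtain ⟨X, hX0, hX⟩ := hl
  have hadj (z : H) : adjoint X (adjoint T z) = star l • adjoint N (adjoint X z) := by
    have hop := congrArg adjoint hX
    rw [adjoint_comp, map_smulₛₗ, adjoint_comp] at hop
    exact DFunLike.congr_fun hop z
  have hcancel {z : H} (hz : adjoint X (adjoint T z) = 0) : adjoint X z = 0 := by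
    rw [hadj, smul_eq_zero_iff_right (star_ne_zero.2 hl0)] at hz
    exact hN (hz.trans (map_zero _).symm)
  have hvanish (n : ℕ) : ∀ w, adjoint T w = 0 → adjoint X ((T ^ n) w) = 0 := by
    induction n with
    | zero => exact fun w hw => hcancel (by rw [pow_zero, one_apply_eq_self, hw, map_zero])
    | succ n ih =>
      intro w hw
      refine hcancel ?_
      rw [hT.adjoint_pow_succ_apply]
      exact ih _ (hT.adjoint_adjoint_apply_eq_zero hw)
  have hzero : adjoint X = 0 := hT.eq_zero_of_forall_apply_pow_eq_zero hp hvanish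
  exact hX0 (by rw [← adjoint_adjoint X, hzero, map_zero])

lemma mval_modulus_le_of_mem_intertwiningValues {R : H →L[ℂ] H} {T : G →L[ℂ] G} {l : ℂ}
    (hl : l ∈ intertwiningValues R T) :
    mval (modulus R) ≤ ‖l‖ * ‖T‖ := by
  obtain ⟨X, hX0, hX⟩ := hl
  rcases (mval_nonneg (modulus_isPositive R)).eq_or_lt with hm | hm
  · rw [← hm]
    positivity
  refine le_of_mul_le_mul_right ?_ (norm_pos_iff.2 hX0)
  rw [← le_div_iff₀' hm]
  refine opNorm_le_bound _ (by positivity) fun x => ?_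
  rw [div_mul_eq_mul_div, le_div_iff₀' hm]
  calc mval (modulus R) * ‖X x‖ ≤ ‖R (X x)‖ := mval_modulus_mul_norm_le R _
    _ = ‖l‖ * ‖X (T x)‖ := by rw [apply_comp_eq hX, norm_smul]
    _ ≤ ‖l‖ * (‖X‖ * (‖T‖ * ‖x‖)) := by gcongr; exact X.le_opNorm_of_le (T.le_opNorm x)
    _ = ‖l‖ * ‖T‖ * ‖X‖ * ‖x‖ := by ring

section Bounds

variable [CompleteSpace G] {R : G →L[ℂ] G} {T : H →L[ℂ] H} {l : ℂ}

lemma exists_eigenvectors_of_mem_intertwiningValues (hR : IsQuasinormal R) (hT : IsQuasinormal T)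
    (hRinj : Function.Injective R) (hl : l ∈ intertwiningValues R T)
    (hle : ‖l‖ * ‖T‖ ≤ mval (modulus R)) :
    (∃ x : G, x ≠ 0 ∧ modulus R x = (mval (modulus R) : ℂ) • x) ∧
      ∃ y : H, y ≠ 0 ∧ modulus T y = (‖T‖ : ℂ) • y := by
  have hlT : 0 < ‖l‖ * ‖T‖ := norm_mul_norm_pos_of_mem_intertwiningValues hRinj hl
  have hm : 0 < mval (modulus R) := hlT.trans_le hle
  have hl0 : 0 < ‖l‖ := pos_of_mul_pos_left hlT (norm_nonneg T)
  have hT0 : 0 < ‖T‖ := pos_of_mul_pos_right hlT (norm_nonneg l)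
  obtain ⟨X, hX0, hX⟩ := hl
  obtain ⟨x, hx⟩ : ∃ x, X x ≠ 0 := DFunLike.ne_iff.1 hX0
  have hRX (n : ℕ) : ‖(R ^ n) (X x)‖ ≤ ‖l‖ ^ n * (‖X‖ * ‖(T ^ n) x‖) := by
    rw [pow_apply_comp_eq hX, norm_smul, norm_pow]
    gcongr
    exact X.le_opNorm _
  constructor
  · refine exists_eigenvector_mval (modulus_isPositive R) hm hx (C := ‖X‖ * ‖x‖) fun n => ?_
    rw [hR.norm_modulus_pow_apply]
    calc ‖(R ^ n) (X x)‖ ≤ ‖l‖ ^ n * (‖X‖ * ‖(T ^ n) x‖) := hRX n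
      _ ≤ ‖l‖ ^ n * (‖X‖ * (‖T‖ ^ n * ‖x‖)) := by gcongr; exact norm_pow_apply_le T n x
      _ = ‖X‖ * ‖x‖ * (‖l‖ * ‖T‖) ^ n := by ring
      _ ≤ ‖X‖ * ‖x‖ * mval (modulus R) ^ n := by gcongr
  · rw [← norm_modulus T]
    refine exists_eigenvector_norm (x := x) (modulus_isPositive T) (by rwa [norm_modulus])
      (div_pos (norm_pos_iff.2 hx) (norm_pos_iff.2 hX0)) fun n => ?_
    rw [hT.norm_modulus_pow_apply, norm_modulus, div_mul_eq_mul_div,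
      div_le_iff₀ (norm_pos_iff.2 hX0)]
    refine le_of_mul_le_mul_left ?_ (pow_pos hl0 n)
    calc ‖l‖ ^ n * (‖X x‖ * ‖T‖ ^ n) = (‖l‖ * ‖T‖) ^ n * ‖X x‖ := by ring
      _ ≤ mval (modulus R) ^ n * ‖X x‖ := by gcongr
      _ ≤ ‖(R ^ n) (X x)‖ :=
        pow_mul_norm_le_norm_pow_apply hm.le (mval_modulus_mul_norm_le R) n (X x)
      _ ≤ ‖l‖ ^ n * (‖(T ^ n) x‖ * ‖X‖) := by rw [mul_comm _ ‖X‖]; exact hRX n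

lemma mem_intertwiningValues_of_lt [Nontrivial G] (hR : IsQuasinormal R) (hT : IsQuasinormal T)
    (hp : IsPure T) (hl : mval (modulus R) < ‖l‖ * ‖T‖) : l ∈ intertwiningValues R T := by
  have hm : 0 ≤ mval (modulus R) := mval_nonneg (modulus_isPositive R)
  have hl0 : 0 < ‖l‖ := pos_of_mul_pos_left (hm.trans_lt hl) (norm_nonneg T)
  obtain ⟨b, hmb, hbT⟩ := exists_between ((div_lt_iff₀' hl0).2 hl)
  obtain ⟨a, hma, hab⟩ := exists_between ((div_lt_iff₀' hl0).1 hmb)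
  obtain ⟨v, hv, C, hvC⟩ := hT.exists_isBackwardOrbit hp ((div_nonneg hm hl0.le).trans_lt hmb) hbT
  obtain ⟨y, hy, D, hyD⟩ := exists_norm_pow_apply_le_of_mval_lt (modulus_isPositive R) hma
  simp only [hR.norm_modulus_pow_apply] at hyD
  exact hv.mem_intertwiningValues hy (norm_pos_iff.1 hl0)
    (summable_smul_rankOne (hm.trans_lt hma).le hab hyD hvC)

end Bounds

end Complete

section OrthogonalSum

variable {E K : Type*} [NormedAddCommGroup E] [InnerProductSpace ℂ E] [NormedAddCommGroup K]
  [InnerProductSpace ℂ K]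

lemma mem_intertwiningValues_comp_left {R : G →L[ℂ] G} {N : E →L[ℂ] E}
    {M : K →L[ℂ] K} {J : E →L[ℂ] G} (hJ : R ∘L J = J ∘L N) {X : K →L[ℂ] E} {l : ℂ}
    (hX : N ∘L X = l • (X ∘L M)) (h0 : J ∘L X ≠ 0) : l ∈ intertwiningValues R M :=
  ⟨J ∘L X, h0, by rw [← comp_assoc, hJ, comp_assoc, hX, comp_smul, comp_assoc]⟩

lemma mem_intertwiningValues_comp_right {R : G →L[ℂ] G} {N : E →L[ℂ] E}
    {M : K →L[ℂ] K} {J : E →L[ℂ] K} (hJ : M ∘L J = J ∘L N) {X : K →L[ℂ] G} {l : ℂ}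
    (hX : R ∘L X = l • (X ∘L M)) (h0 : X ∘L J ≠ 0) : l ∈ intertwiningValues R N :=
  ⟨X ∘L J, h0, by rw [← comp_assoc, hX, smul_comp, comp_assoc, hJ, comp_assoc]⟩

/-- The inclusion of the first summand into the Hilbert space direct sum. -/
noncomputable def inlL2 (E H : Type*) [NormedAddCommGroup E] [InnerProductSpace ℂ E]
    [NormedAddCommGroup H] [InnerProductSpace ℂ H] : E →L[ℂ] WithLp 2 (E × H) :=
  (WithLp.prodContinuousLinearEquiv 2 ℂ E H).symm ∘L ContinuousLinearMap.inl ℂ E H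

/-- The inclusion of the second summand into the Hilbert space direct sum. -/
noncomputable def inrL2 (E H : Type*) [NormedAddCommGroup E] [InnerProductSpace ℂ E]
    [NormedAddCommGroup H] [InnerProductSpace ℂ H] : H →L[ℂ] WithLp 2 (E × H) :=
  (WithLp.prodContinuousLinearEquiv 2 ℂ E H).symm ∘L ContinuousLinearMap.inr ℂ E H

lemma fstL_comp_inlL2 : WithLp.fstL 2 ℂ E H ∘L inlL2 E H = .id ℂ E := rfl

lemma sndL_comp_inrL2 : WithLp.sndL 2 ℂ E H ∘L inrL2 E H = .id ℂ H := rfl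

lemma inlL2_comp_fstL_add_inrL2_comp_sndL :
    inlL2 E H ∘L WithLp.fstL 2 ℂ E H + inrL2 E H ∘L WithLp.sndL 2 ℂ E H = .id ℂ _ := by
  ext1 z
  exact WithLp.ofLp_injective 2 (Prod.ext (add_zero _) (zero_add _))

/-- `R` is the orthogonal direct sum `N ⊕ T`, acting on `E ⊕ H`. -/
def IsDirectSum (N : E →L[ℂ] E) (T : H →L[ℂ] H) (R : WithLp 2 (E × H) →L[ℂ] WithLp 2 (E × H)) :
    Prop :=
  ∀ (x : E) (y : H),
    R ((WithLp.equiv 2 (E × H)).symm (x, y)) = (WithLp.equiv 2 (E × H)).symm (N x, T y)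

namespace IsDirectSum

variable {N : E →L[ℂ] E} {T : H →L[ℂ] H} {R : WithLp 2 (E × H) →L[ℂ] WithLp 2 (E × H)}
  (hR : IsDirectSum N T R)

include hR

lemma comp_inlL2 : R ∘L inlL2 E H = inlL2 E H ∘L N := by
  ext1 x
  exact (hR x 0).trans (by rw [map_zero]; rfl)

lemma comp_inrL2 : R ∘L inrL2 E H = inrL2 E H ∘L T := by
  ext1 y
  exact (hR 0 y).trans (by rw [map_zero]; rfl)

lemma comp_fstL : N ∘L WithLp.fstL 2 ℂ E H = WithLp.fstL 2 ℂ E H ∘L R := by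
  ext1 z
  exact congrArg WithLp.fst (hR z.fst z.snd).symm

lemma comp_sndL : T ∘L WithLp.sndL 2 ℂ E H = WithLp.sndL 2 ℂ E H ∘L R := by
  ext1 z
  exact congrArg WithLp.snd (hR z.fst z.snd).symm

lemma injective_left (hinj : Function.Injective R) : Function.Injective N := by
  have hinl : Function.Injective (inlL2 E H) :=
    Function.LeftInverse.injective (g := WithLp.fstL 2 ℂ E H) fun _ => rfl
  refine Function.Injective.of_comp (f := inlL2 E H) ?_
  rw [← ContinuousLinearMap.coe_comp, ← hR.comp_inlL2, ContinuousLinearMap.coe_comp]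
  exact hinj.comp hinl

lemma injective_right (hinj : Function.Injective R) : Function.Injective T := by
  have hinr : Function.Injective (inrL2 E H) :=
    Function.LeftInverse.injective (g := WithLp.sndL 2 ℂ E H) fun _ => rfl
  refine Function.Injective.of_comp (f := inrL2 E H) ?_
  rw [← ContinuousLinearMap.coe_comp, ← hR.comp_inrL2, ContinuousLinearMap.coe_comp]
  exact hinj.comp hinr

lemma intertwiningValues_left_eq_union (M : K →L[ℂ] K) :
    intertwiningValues R M = intertwiningValues N M ∪ intertwiningValues T M := by
  refine Set.Subset.antisymm ?_ (Set.union_subset ?_ ?_)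
  · rintro l ⟨X, hX0, hX⟩
    by_cases hfst : WithLp.fstL 2 ℂ E H ∘L X = 0
    · refine Or.inr (mem_intertwiningValues_comp_left hR.comp_sndL hX fun hsnd => hX0 ?_)
      rw [← id_comp X, ← inlL2_comp_fstL_add_inrL2_comp_sndL, add_comp, comp_assoc, comp_assoc,
        hfst, hsnd, comp_zero, comp_zero, add_zero]
    · exact Or.inl (mem_intertwiningValues_comp_left hR.comp_fstL hX hfst)
  · rintro l ⟨X, hX0, hX⟩
    refine mem_intertwiningValues_comp_left hR.comp_inlL2 hX fun h0 => hX0 ?_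
    rw [← id_comp X, ← fstL_comp_inlL2 (H := H), comp_assoc, h0, comp_zero]
  · rintro l ⟨X, hX0, hX⟩
    refine mem_intertwiningValues_comp_left hR.comp_inrL2 hX fun h0 => hX0 ?_
    rw [← id_comp X, ← sndL_comp_inrL2 (E := E), comp_assoc, h0, comp_zero]

lemma intertwiningValues_right_eq_union (M : K →L[ℂ] K) :
    intertwiningValues M R = intertwiningValues M N ∪ intertwiningValues M T := by
  refine Set.Subset.antisymm ?_ (Set.union_subset ?_ ?_)
  · rintro l ⟨X, hX0, hX⟩
    by_cases hinl : X ∘L inlL2 E H = 0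
    · refine Or.inr (mem_intertwiningValues_comp_right hR.comp_inrL2 hX fun hinr => hX0 ?_)
      rw [← comp_id X, ← inlL2_comp_fstL_add_inrL2_comp_sndL, comp_add, ← comp_assoc, ← comp_assoc,
        hinl, hinr, zero_comp, zero_comp, add_zero]
    · exact Or.inl (mem_intertwiningValues_comp_right hR.comp_inlL2 hX hinl)
  · rintro l ⟨X, hX0, hX⟩
    refine mem_intertwiningValues_comp_right hR.comp_fstL hX fun h0 => hX0 ?_
    rw [← comp_id X, ← fstL_comp_inlL2 (H := H), ← comp_assoc, h0, zero_comp]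
  · rintro l ⟨X, hX0, hX⟩
    refine mem_intertwiningValues_comp_right hR.comp_sndL hX fun h0 => hX0 ?_
    rw [← comp_id X, ← sndL_comp_inrL2 (E := E), ← comp_assoc, h0, zero_comp]

end IsDirectSum

end OrthogonalSum

end Operators

theorem extSpectrum_quasinormal_open_case
    {E H : Type*} [NormedAddCommGroup E] [InnerProductSpace ℂ E] [CompleteSpace E] [NormedAddCommGroup H] [InnerProductSpace ℂ H] [CompleteSpace H] [Nontrivial E] [Nontrivial H]
    (N : E →L[ℂ] E) (hN : adjoint N ∘L N = N ∘L adjoint N)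
    (T : H →L[ℂ] H) (hTqn : IsQuasinormal T) (hTpure : IsPure T)
    (R : WithLp 2 (E × H) →L[ℂ] WithLp 2 (E × H))
    (hR : ∀ (x : E) (y : H),
      R ((WithLp.equiv 2 (E × H)).symm (x, y)) = (WithLp.equiv 2 (E × H)).symm (N x, T y))
    (hRinj : Function.Injective R)
    (hcase : ¬ ((mval (modulus N) < mval (modulus T) ∧ (∃ x : E, x ≠ 0 ∧ modulus N x = (mval (modulus N) : ℂ) • x) ∧ (∃ y : H, y ≠ 0 ∧ modulus T y = (‖T‖ : ℂ) • y)) ∨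
      (mval (modulus N) = mval (modulus T) ∧
        (((∃ x : E, x ≠ 0 ∧ modulus N x = (mval (modulus N) : ℂ) • x) ∧ (∃ y : H, y ≠ 0 ∧ modulus T y = (‖T‖ : ℂ) • y)) ∨ ((∃ y : H, y ≠ 0 ∧ modulus T y = (mval (modulus T) : ℂ) • y) ∧ (∃ y : H, y ≠ 0 ∧ modulus T y = (‖T‖ : ℂ) • y)))) ∨
      (mval (modulus T) < mval (modulus N) ∧ (∃ y : H, y ≠ 0 ∧ modulus T y = (mval (modulus T) : ℂ) • y) ∧ (∃ y : H, y ≠ 0 ∧ modulus T y = (‖T‖ : ℂ) • y)))) :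
    extSpectrum R = extSpectrum N ∪
      {l : ℂ | min (mval (modulus N)) (mval (modulus T)) / ‖T‖ < ‖l‖} := by
  have hNqn : IsQuasinormal N := isQuasinormal_of_isStarNormal ⟨hN⟩
  have hsum : IsDirectSum N T R := hR
  have hNinj := hsum.injective_left hRinj
  have hTinj := hsum.injective_right hRinj
  have hT0 : 0 < ‖T‖ := by
    obtain ⟨x, hx⟩ := exists_ne (0 : H)
    exact norm_pos_iff.2 (by rintro rfl; exact hx (hTinj rfl))
  have hTN : intertwiningValues T N = ∅ := intertwiningValues_eq_empty hTqn hTpure hTinj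
    ((injective_iff_map_eq_zero _).2 fun x hx =>
      (map_eq_zero_iff N hNinj).1 ((IsStarNormal.adjoint_apply_eq_zero_iff ⟨hN⟩ x).1 hx))
  change intertwiningValues R R = intertwiningValues N N ∪ _
  rw [hsum.intertwiningValues_left_eq_union, hsum.intertwiningValues_right_eq_union,
    hsum.intertwiningValues_right_eq_union, hTN, Set.empty_union, Set.union_assoc]
  congr 1
  ext l
  rw [Set.mem_ofPred_eq, div_lt_iff₀ hT0, min_lt_iff]
  refine ⟨fun hl => ?_, Or.imp (mem_intertwiningValues_of_lt hNqn hTqn hTpure)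
    (mem_intertwiningValues_of_lt hTqn hTqn hTpure)⟩
  by_contra! ⟨hleN, hleT⟩
  rcases hl with hl | hl
  · have heig := exists_eigenvectors_of_mem_intertwiningValues hNqn hTqn hNinj hl hleN
    exact hcase (((mval_modulus_le_of_mem_intertwiningValues hl).trans hleT).lt_or_eq.imp
      (⟨·, heig⟩) fun heq => Or.inl ⟨heq, Or.inl heig⟩)
  · have heig := exists_eigenvectors_of_mem_intertwiningValues hTqn hTqn hTinj hl hleT
    exact hcase (Or.inr (((mval_modulus_le_of_mem_intertwiningValues hl).trans hleN).eq_or_lt.imp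
      (fun heq => ⟨heq.symm, Or.inr heig⟩) (⟨·, heig⟩)))
end
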